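/- There is no primitive non-constant arithmetic progression of integers of the form $x_1^5, x_2^2, x_3^2, x_4^5$ (four terms, with exponent pattern $(5,2,2,5)$). -/

import Mathlib

/-!
Eliminating the common difference from `x₁ = a`, `x₂ = b`, `x₃ = c`, `x₄ = d` leaves
`2 a⁵ + d⁵ = 3 b²` and `2 d⁵ + a⁵ = 3 c²`. Let `θ⁵ = 2`. The ring of integers of `ℚ(θ)` is the
principal ideal domain `ℤ[θ]`, in which `3` is `1 + θ` times its cofactor `δ` and `2 a⁵ + d⁵` is
`θ a + d` times its cofactor `Q(a, d)`. Up to squares `Q(a, d) / δ` is a unit at all places prime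
to `30`, and the square class of such an element is determined by its residue modulo `θ¹¹`; hence
`Q(a, d) = δ y₁²` and `Q(d, a) = δ y₂²`. This curve maps to the genus one quartic
`n⁴ + 10 δ n² + 5 δ² = s²`, and the image of a progression is `θ`-adically very close to infinity.

Such points are excluded by descent through a 2-isogeny onto the quartic with `5` replaced
by `-10`: the odd root of the quadratic attached to a point is congruent to a square, so is a
square by the same residue criterion, which lifts the point to the isogenous quartic. Two isogenies
bring the point a factor `4` further from infinity, until it violates a congruence modulo `θ¹¹`.
-/

open NumberField Polynomial

open scoped WithZero

theorem rat_pow_five_ne_two (b : ℚ) : b ^ 5 ≠ 2 := by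
  intro h
  have hval := congrArg (padicValRat 2) h
  have htwo : padicValRat 2 (2 : ℚ) = 1 := by exact_mod_cast padicValRat.self (p := 2) one_lt_two
  rw [padicValRat.pow, htwo] at hval
  omega

theorem irreducible_X_pow_five_sub_two : Irreducible (X ^ 5 - C 2 : ℚ[X]) :=
  X_pow_sub_C_irreducible_of_prime Nat.prime_five rat_pow_five_ne_two

/-- An element of `ℤ[θ]`, `θ ^ 5 = 2`, given by its coordinates with respect to `1, θ, …, θ ^ 4`;
this makes congruences in `ℤ[θ]` decidable. -/
structure QuinticInt where
  /-- coefficient of `1` -/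
  c0 : ℤ
  /-- coefficient of `θ` -/
  c1 : ℤ
  /-- coefficient of `θ ^ 2` -/
  c2 : ℤ
  /-- coefficient of `θ ^ 3` -/
  c3 : ℤ
  /-- coefficient of `θ ^ 4` -/
  c4 : ℤ

namespace QuinticInt

instance : One QuinticInt := ⟨⟨1, 0, 0, 0, 0⟩⟩

instance : Sub QuinticInt :=
  ⟨fun x y => ⟨x.c0 - y.c0, x.c1 - y.c1, x.c2 - y.c2, x.c3 - y.c3, x.c4 - y.c4⟩⟩

instance : Mul QuinticInt where
  mul x y :=
    { c0 := x.c0 * y.c0 + 2 * (x.c1 * y.c4 + x.c2 * y.c3 + x.c3 * y.c2 + x.c4 * y.c1)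
      c1 := x.c0 * y.c1 + x.c1 * y.c0 + 2 * (x.c2 * y.c4 + x.c3 * y.c3 + x.c4 * y.c2)
      c2 := x.c0 * y.c2 + x.c1 * y.c1 + x.c2 * y.c0 + 2 * (x.c3 * y.c4 + x.c4 * y.c3)
      c3 := x.c0 * y.c3 + x.c1 * y.c2 + x.c2 * y.c1 + x.c3 * y.c0 + 2 * (x.c4 * y.c4)
      c4 := x.c0 * y.c4 + x.c1 * y.c3 + x.c2 * y.c2 + x.c3 * y.c1 + x.c4 * y.c0 }

instance : Pow QuinticInt ℕ := ⟨fun x n => npowRec n x⟩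

/-- The element of a ring `R` with coordinates `x`, for a choice of `θ` in `R`. -/
def eval {R : Type*} [Ring R] (θ : R) (x : QuinticInt) : R :=
  x.c0 + x.c1 * θ + x.c2 * θ ^ 2 + x.c3 * θ ^ 3 + x.c4 * θ ^ 4

theorem map_eval {R S : Type*} [Ring R] [Ring S] (f : R →+* S) (θ : R) (x : QuinticInt) :
    f (eval θ x) = eval (f θ) x := by
  simp only [eval, map_add, map_mul, map_pow, map_intCast]

section CommRing

variable {R : Type*} [CommRing R] {θ : R}

theorem eval_one : eval θ 1 = 1 := by simp [eval, show (1 : QuinticInt) = ⟨1, 0, 0, 0, 0⟩ from rfl]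

theorem eval_sub (x y : QuinticInt) : eval θ (x - y) = eval θ x - eval θ y := by
  change eval θ ⟨_, _, _, _, _⟩ = _
  simp only [eval]
  push_cast
  ring

theorem eval_mul (hθ : θ ^ 5 = 2) (x y : QuinticInt) : eval θ (x * y) = eval θ x * eval θ y := by
  change eval θ ⟨_, _, _, _, _⟩ = _
  simp only [eval]
  push_cast
  linear_combination (-(x.c1 * y.c4 + x.c2 * y.c3 + x.c3 * y.c2 + x.c4 * y.c1 : R) -
    (x.c2 * y.c4 + x.c3 * y.c3 + x.c4 * y.c2) * θ - (x.c3 * y.c4 + x.c4 * y.c3) * θ ^ 2 -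
    x.c4 * y.c4 * θ ^ 3) * hθ

theorem eval_pow (hθ : θ ^ 5 = 2) (x : QuinticInt) (n : ℕ) : eval θ (x ^ n) = eval θ x ^ n := by
  induction n with
  | zero => rw [pow_zero]; exact eval_one
  | succ n ih => rw [pow_succ, ← ih]; exact eval_mul hθ (x ^ n) x

end CommRing

/-- The matrix of multiplication by `x` in the basis `1, θ, …, θ ^ 4`. -/
def mulMatrix (x : QuinticInt) : Matrix (Fin 5) (Fin 5) ℤ :=
  !![x.c0, 2 * x.c4, 2 * x.c3, 2 * x.c2, 2 * x.c1;
    x.c1, x.c0, 2 * x.c4, 2 * x.c3, 2 * x.c2;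
    x.c2, x.c1, x.c0, 2 * x.c4, 2 * x.c3;
    x.c3, x.c2, x.c1, x.c0, 2 * x.c4;
    x.c4, x.c3, x.c2, x.c1, x.c0]

end QuinticInt

section FiniteField

variable {F : Type*} [Field F] [Fintype F] {β : F}

theorem one_add_fifth_root_eq_zero (hthree : (3 : F) = 0) (hβ : β ^ 5 = 2)
    (hcard : Fintype.card F - 1 ∣ 8) : 1 + β = 0 := by
  have hunit : β ≠ 0 := by
    rintro rfl
    exact one_ne_zero (α := F) (by linear_combination hβ + hthree)
  have hpow : β ^ 8 = 1 :=
    orderOf_dvd_iff_pow_eq_one.mp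
      ((orderOf_dvd_of_pow_eq_one (FiniteField.pow_card_sub_one_eq_one β hunit)).trans hcard)
  have hcube : β ^ 3 = -1 := by linear_combination β ^ 3 * hthree - hpow + β ^ 3 * hβ
  have hsq : β ^ 2 = 1 := by linear_combination -hβ + β ^ 2 * hcube - hthree
  linear_combination hcube - β * hsq

theorem zmod_fifth_root {p : ℕ} (hp : p = 5 ∨ p = 7 ∨ p = 11 ∨ p = 13) :
    ∀ β : ZMod p, β ^ 5 = 2 → 1 + β ^ 2 = 0 ∨ 1 + β + β ^ 2 = 0 ∨ 1 + β ^ 3 - β ^ 4 = 0 := by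
  rcases hp with rfl | rfl | rfl | rfl <;> decide +kernel

theorem fifth_root_of_card_eq_prime {p : ℕ} [Fact p.Prime]
    (hp : p = 5 ∨ p = 7 ∨ p = 11 ∨ p = 13) (hF : Fintype.card F = p) (hβ : β ^ 5 = 2) :
    1 + β ^ 2 = 0 ∨ 1 + β + β ^ 2 = 0 ∨ 1 + β ^ 3 - β ^ 4 = 0 := by
  let e := (ZMod.ringEquivOfPrime F Fact.out hF).symm
  have h := zmod_fifth_root hp (e β) (by rw [← map_pow, hβ, map_ofNat])
  simpa only [← map_one e, ← map_pow, ← map_add, ← map_sub, map_eq_zero_iff e e.injective] using h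

/-- The five polynomials are those whose values at `2 ^ (1 / 5)` generate the prime ideals of norm
`2`, `3`, `5`, `7`, `13`. -/
theorem fifth_root_of_card_lt_fourteen (hβ : β ^ 5 = 2) (hF : Fintype.card F < 14) :
    β = 0 ∨ 1 + β = 0 ∨ 1 + β ^ 2 = 0 ∨ 1 + β + β ^ 2 = 0 ∨ 1 + β ^ 3 - β ^ 4 = 0 := by
  obtain ⟨p, hchar, n, hp, hcard⟩ := FiniteField.card' F
  have hpF : (p : F) = 0 := CharP.cast_eq_zero F p
  have hp14 : p < 14 := (Nat.le_self_pow n.ne_zero p).trans_lt (hcard ▸ hF)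
  have hcases : p = 2 ∨ p = 3 ∨ p = 5 ∨ p = 7 ∨ p = 11 ∨ p = 13 := by
    interval_cases p <;> revert hp <;> norm_num
  have hn := n.pos
  rcases hcases with rfl | rfl | hlarge
  · exact .inl (pow_eq_zero_iff (by norm_num) |>.mp (hβ.trans hpF))
  · have hn2 : (n : ℕ) ≤ 2 := by
      by_contra! hn
      have := Nat.pow_le_pow_right (n := 3) three_pos hn
      omega
    refine .inr (.inl (one_add_fifth_root_eq_zero hpF hβ ?_))
    rw [hcard]
    interval_cases (n : ℕ) <;> norm_num
  · have hn1 : (n : ℕ) = 1 := by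
      by_contra hn1
      have := pow_le_pow_right₀ hp.one_le (show 2 ≤ (n : ℕ) by omega)
      have := Nat.pow_le_pow_left (show 5 ≤ p by omega) 2
      omega
    have := Fact.mk hp
    exact .inr (.inr (fifth_root_of_card_eq_prime hlarge (by rw [hcard, hn1, pow_one]) hβ))

/-- The square of `β` has order `5`, and `81` is the least power of `3` congruent to `1`
modulo `5`. -/
theorem card_eq_eighty_one_of_fifth_root (hβ : β ^ 5 = 2) (hF : Fintype.card F ∣ 81)
    (hroot : 1 - β + β ^ 2 - β ^ 3 + β ^ 4 = 0) : Fintype.card F = 81 := by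
  have hthree : (3 : F) = 0 := by linear_combination (1 + β) * hroot - hβ
  have hunit : β ^ 2 ≠ 0 := by
    refine pow_ne_zero 2 ?_
    rintro rfl
    norm_num at hroot
  have hpow : (β ^ 2) ^ 5 = 1 := by linear_combination (β ^ 5 + 2) * hβ + hthree
  have hne : β ^ 2 ≠ 1 := by
    intro hsq
    have hβ2 : β = 2 := by linear_combination hβ - β * (β ^ 2 + 1) * hsq
    rw [hβ2] at hroot
    exact one_ne_zero (α := F) (by linear_combination 4 * hthree - hroot)
  have : Fact (Nat.Prime 5) := ⟨Nat.prime_five⟩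
  have hfive : 5 ∣ Fintype.card F - 1 :=
    orderOf_eq_prime hpow hne ▸ orderOf_dvd_of_pow_eq_one
      (FiniteField.pow_card_sub_one_eq_one _ hunit)
  obtain ⟨k, hk, hq⟩ := (Nat.dvd_prime_pow Nat.prime_three).mp (show Fintype.card F ∣ 3 ^ 4 from hF)
  have hone : 1 < Fintype.card F := Fintype.one_lt_card
  interval_cases k <;> omega

end FiniteField

section NumberField

variable {K : Type*} [Field K] [NumberField K]

theorem exists_discr_eq_sq_mul_discr {ι : Type*} [Fintype ι] [DecidableEq ι]
    (hι : Fintype.card ι = Module.finrank ℚ K) (v : ι → 𝓞 K) :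
    ∃ m : ℤ, Algebra.discr ℚ (fun i => (v i : K)) = m ^ 2 * discr K := by
  let e : Module.Free.ChooseBasisIndex ℤ (𝓞 K) ≃ ι := Fintype.equivOfCardEq (by
    rw [← Module.finrank_eq_card_chooseBasisIndex, RingOfIntegers.rank, hι])
  let b := (RingOfIntegers.basis K).reindex e
  have hdiscr := Algebra.discr_of_matrix_vecMul (A := ℤ) b (b.toMatrix v)
  rw [b.toMatrix_map_vecMul, discr_eq_discr] at hdiscr
  have hcast : Algebra.discr ℚ (fun i => (v i : K)) = (Algebra.discr ℤ v : ℤ) := by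
    simp only [Algebra.discr_def, Int.cast_det]
    congr 1
    ext i j
    simp only [Matrix.map_apply, Algebra.traceMatrix_apply, Algebra.traceForm_apply,
      Algebra.coe_trace_int, map_mul]
  exact ⟨(b.toMatrix v).det, by rw [hcast, hdiscr]; push_cast; rfl⟩

theorem prime_of_natAbs_norm_prime {g : 𝓞 K} (hg : (Algebra.norm ℤ g).natAbs.Prime) : Prime g := by
  refine Ideal.prime_of_irreducible_absNorm_span ?_ (by rwa [Ideal.absNorm_span_singleton])
  rintro rfl
  exact Nat.not_prime_zero (by simpa using hg)

theorem isPrincipal_of_mem_of_natAbs_norm_prime {I : Ideal (𝓞 K)} (hI : I ≠ ⊤) {g : 𝓞 K}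
    (hgI : g ∈ I) (hg : (Algebra.norm ℤ g).natAbs.Prime) : I.IsPrincipal := by
  have hprime := prime_of_natAbs_norm_prime hg
  have hmax : (Ideal.span {g}).IsMaximal :=
    ((Ideal.span_singleton_prime hprime.ne_zero).mpr hprime).isMaximal
      (by simpa using hprime.ne_zero)
  exact ⟨g, (hmax.eq_of_le hI ((Ideal.span_singleton_le_iff_mem I).mpr hgI)).symm⟩

theorem natCard_quotient_span_singleton (g : 𝓞 K) :
    Nat.card (𝓞 K ⧸ Ideal.span {g}) = (Algebra.norm ℤ g).natAbs := by
  rw [← Submodule.cardQuot_apply, ← Ideal.absNorm_apply, Ideal.absNorm_span_singleton]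

theorem dvd_or_dvd_sub_one_of_natAbs_norm_eq_two {g : 𝓞 K} (hg : (Algebra.norm ℤ g).natAbs = 2)
    (x : 𝓞 K) : g ∣ x ∨ g ∣ x - 1 := by
  have hcard : Nat.card (𝓞 K ⧸ Ideal.span {g}) = 2 := (natCard_quotient_span_singleton g).trans hg
  have : Finite (𝓞 K ⧸ Ideal.span {g}) := Nat.finite_of_card_ne_zero (by omega)
  have := Fintype.ofFinite (𝓞 K ⧸ Ideal.span {g})
  let e := (ZMod.ringEquivOfPrime (𝓞 K ⧸ Ideal.span {g}) Nat.prime_two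
    (by rw [← Nat.card_eq_fintype_card, hcard])).symm
  have key : ∀ t : ZMod 2, t = 0 ∨ t - 1 = 0 := by decide
  have h := key (e (Ideal.Quotient.mk _ x))
  simpa only [← map_one e, ← map_sub, map_eq_zero_iff e e.injective,
    ← map_one (Ideal.Quotient.mk (Ideal.span {g})), Ideal.Quotient.eq_zero_iff_dvd] using h

end NumberField

theorem QuinticInt.coe_eval {K : Type*} [Field K] (θ : 𝓞 K) (x : QuinticInt) :
    ((x.eval θ : 𝓞 K) : K) = x.eval (θ : K) :=
  QuinticInt.map_eval (algebraMap (𝓞 K) K) θ x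

/-- `θ` is an algebraic integer with `θ ^ 5 = 2` and `K = ℚ(θ)`. -/
structure IsFifthRootTwo {K : Type*} [Field K] [NumberField K] (θ : 𝓞 K) : Prop where
  pow_five : θ ^ 5 = 2
  finrank : Module.finrank ℚ K = 5

namespace IsFifthRootTwo

variable {K : Type*} [Field K] [NumberField K] {θ : 𝓞 K} (h : IsFifthRootTwo θ)
include h

theorem coe_pow_five : (θ : K) ^ 5 = 2 := by
  rw [← map_pow, h.pow_five, map_ofNat]

theorem minpoly_eq : minpoly ℚ (θ : K) = X ^ 5 - C 2 :=
  (minpoly.eq_of_irreducible_of_monic irreducible_X_pow_five_sub_two (by simp [h.coe_pow_five])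
    (monic_X_pow_sub_C _ (by norm_num))).symm

/-- The basis `1, θ, …, θ ^ 4` of `K` over `ℚ`. -/
noncomputable def powerBasis : Module.Basis (Fin 5) ℚ K :=
  basisOfLinearIndependentOfCardEqFinrank (b := fun i : Fin 5 => (θ : K) ^ (i : ℕ))
    (by
      have hlin := linearIndependent_pow (K := ℚ) (θ : K)
      rwa [h.minpoly_eq, natDegree_X_pow_sub_C] at hlin)
    (by simp [h.finrank])

theorem powerBasis_apply (i : Fin 5) : h.powerBasis i = (θ : K) ^ (i : ℕ) := by
  simp [powerBasis]

theorem leftMulMatrix_eval (x : QuinticInt) :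
    Algebra.leftMulMatrix h.powerBasis (x.eval (θ : K)) =
      (Int.castRingHom ℚ).mapMatrix x.mulMatrix := by
  have hmul (j : Fin 5) : x.eval (θ : K) * h.powerBasis j =
      ∑ i, (x.mulMatrix i j : ℚ) • h.powerBasis i := by
    simp only [h.powerBasis_apply, Fin.sum_univ_five, QuinticInt.eval, Algebra.smul_def]
    fin_cases j <;> simp [QuinticInt.mulMatrix]
    · linear_combination x.c4 * h.coe_pow_five
    · linear_combination (x.c3 + x.c4 * θ : K) * h.coe_pow_five
    · linear_combination (x.c2 + x.c3 * θ + x.c4 * θ ^ 2 : K) * h.coe_pow_five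
    · linear_combination (x.c1 + x.c2 * θ + x.c3 * θ ^ 2 + x.c4 * θ ^ 3 : K) * h.coe_pow_five
  ext i j
  rw [Algebra.leftMulMatrix_eq_repr_mul, hmul, h.powerBasis.repr_sum_self]
  rfl

theorem norm_eval (x : QuinticInt) : Algebra.norm ℤ (x.eval θ) = x.mulMatrix.det := by
  have hnorm : ((Algebra.norm ℤ (x.eval θ) : ℤ) : ℚ) = (x.mulMatrix.det : ℤ) := by
    rw [Algebra.coe_norm_int, Algebra.norm_eq_matrix_det h.powerBasis, QuinticInt.coe_eval,
      h.leftMulMatrix_eval, ← RingHom.map_det]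
    rfl
  exact_mod_cast hnorm

theorem trace_eval (x : QuinticInt) : Algebra.trace ℚ K (x.eval (θ : K)) = (5 * x.c0 : ℤ) := by
  rw [Algebra.trace_eq_matrix_trace h.powerBasis, h.leftMulMatrix_eval, Matrix.trace,
    Fin.sum_univ_five]
  change (x.c0 + x.c0 + x.c0 + x.c0 + x.c0 : ℚ) = _
  push_cast
  ring

theorem discr_powers : Algebra.discr ℚ (fun i : Fin 5 => (θ : K) ^ (i : ℕ)) = 50000 := by
  let T : Matrix (Fin 5) (Fin 5) ℤ :=
    .of fun i j => 5 * ((⟨0, 1, 0, 0, 0⟩ : QuinticInt) ^ (i + j : ℕ)).c0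
  have htrace : Algebra.traceMatrix ℚ (fun i : Fin 5 => (θ : K) ^ (i : ℕ)) =
      (Int.castRingHom ℚ).mapMatrix T := by
    ext i j
    have hpow : (θ : K) ^ (i + j : ℕ) =
        ((⟨0, 1, 0, 0, 0⟩ : QuinticInt) ^ (i + j : ℕ)).eval (θ : K) := by
      rw [QuinticInt.eval_pow h.coe_pow_five]
      simp [QuinticInt.eval]
    rw [Algebra.traceMatrix_apply, Algebra.traceForm_apply, ← pow_add, hpow, h.trace_eval]
    rfl
  have hdet : T.det = 50000 := by decide +kernel
  rw [Algebra.discr_def, htrace, ← RingHom.map_det, hdet]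
  norm_num

theorem abs_discr_le : |discr K| ≤ 50000 := by
  obtain ⟨m, hm⟩ := exists_discr_eq_sq_mul_discr (K := K) (by simp [h.finrank])
    (fun i : Fin 5 => θ ^ (i : ℕ))
  simp only [map_pow] at hm
  rw [h.discr_powers] at hm
  have hm : m ^ 2 * discr K = 50000 := by exact_mod_cast hm.symm
  exact Int.le_of_dvd (by norm_num) ((abs_dvd _ _).mpr (Dvd.intro_left _ hm))

theorem nrRealPlaces_eq_one : InfinitePlace.nrRealPlaces K = 1 := by
  classical
  refine le_antisymm ?_ (InfinitePlace.nrRealPlaces_pos_of_odd_finrank (by rw [h.finrank]; decide))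
  rw [← InfinitePlace.card_real_embeddings, Fintype.card_le_one_iff_subsingleton]
  have exists_real_root (φ : {φ : K →+* ℂ // ComplexEmbedding.IsReal φ}) :
      ∃ r : ℝ, φ.1 (θ : K) = r ∧ r ^ 5 = 2 := by
    obtain ⟨r, hr⟩ := Complex.conj_eq_iff_real.mp (RingHom.congr_fun φ.2 (θ : K))
    have hpow := congrArg φ.1 h.coe_pow_five
    rw [map_pow, hr, map_ofNat] at hpow
    exact ⟨r, hr, by exact_mod_cast hpow⟩
  refine ⟨fun φ ψ => Subtype.ext ?_⟩
  obtain ⟨r, hr, hr2⟩ := exists_real_root φ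
  obtain ⟨s, hs, hs2⟩ := exists_real_root ψ
  have hrs : r = s := (Odd.strictMono_pow (by decide : Odd 5)).injective (hr2.trans hs2.symm)
  have hlin : φ.1.toRatAlgHom.toLinearMap = ψ.1.toRatAlgHom.toLinearMap :=
    h.powerBasis.ext fun i => by simp [h.powerBasis_apply, hr, hs, hrs]
  ext x
  exact LinearMap.congr_fun hlin x

theorem nrComplexPlaces_eq_two : InfinitePlace.nrComplexPlaces K = 2 := by
  have hcard := InfinitePlace.card_add_two_mul_card_eq_rank K
  rw [h.finrank, h.nrRealPlaces_eq_one] at hcard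
  omega

theorem minkowskiBound_lt :
    (4 / Real.pi) ^ InfinitePlace.nrComplexPlaces K *
      ((Module.finrank ℚ K).factorial / (Module.finrank ℚ K : ℝ) ^ (Module.finrank ℚ K) *
        √|(discr K : ℝ)|) < 14 := by
  rw [h.nrComplexPlaces_eq_two, h.finrank]
  have hdiscr : √|(discr K : ℝ)| ≤ 223.7 := by
    have : |(discr K : ℝ)| ≤ 50000 := by exact_mod_cast h.abs_discr_le
    exact Real.sqrt_le_iff.mpr ⟨by norm_num, by linarith⟩
  have hpi := Real.pi_gt_d2
  calc (4 / Real.pi) ^ 2 * ((Nat.factorial 5 : ℕ) / ((5 : ℕ) : ℝ) ^ 5 * √|(discr K : ℝ)|)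
      ≤ (4 / 3.14) ^ 2 * ((Nat.factorial 5 : ℕ) / ((5 : ℕ) : ℝ) ^ 5 * 223.7) := by gcongr
    _ < 14 := by norm_num [Nat.factorial]

theorem norm_theta : Algebra.norm ℤ θ = 2 := by
  simpa [QuinticInt.eval] using (h.norm_eval ⟨0, 1, 0, 0, 0⟩).trans (by decide +kernel)

theorem norm_one_add_theta : Algebra.norm ℤ (1 + θ) = 3 := by
  simpa [QuinticInt.eval] using (h.norm_eval ⟨1, 1, 0, 0, 0⟩).trans (by decide +kernel)

theorem norm_one_add_sq : Algebra.norm ℤ (1 + θ ^ 2) = 5 := by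
  simpa [QuinticInt.eval] using (h.norm_eval ⟨1, 0, 1, 0, 0⟩).trans (by decide +kernel)

theorem norm_one_add_theta_add_sq : Algebra.norm ℤ (1 + θ + θ ^ 2) = 7 := by
  simpa [QuinticInt.eval] using (h.norm_eval ⟨1, 1, 1, 0, 0⟩).trans (by decide +kernel)

theorem norm_one_add_cube_sub_fourth : Algebra.norm ℤ (1 + θ ^ 3 - θ ^ 4) = 13 := by
  simpa [QuinticInt.eval, sub_eq_add_neg] using
    (h.norm_eval ⟨1, 0, 0, 1, -1⟩).trans (by decide +kernel)

theorem isPrincipalIdealRing : IsPrincipalIdealRing (𝓞 K) := by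
  refine RingOfIntegers.isPrincipalIdealRing_of_isPrincipal_of_norm_le_of_isPrime ?_
  intro I hI hnorm
  have hmax := hI.isMaximal (nonZeroDivisors.coe_ne_zero I)
  let _ : Field (𝓞 K ⧸ (I : Ideal (𝓞 K))) := Ideal.Quotient.field _
  have : Finite (𝓞 K ⧸ (I : Ideal (𝓞 K))) :=
    Ideal.finiteQuotientOfFreeOfNeBot _ (nonZeroDivisors.coe_ne_zero I)
  let _ := Fintype.ofFinite (𝓞 K ⧸ (I : Ideal (𝓞 K)))
  have hcard : Fintype.card (𝓞 K ⧸ (I : Ideal (𝓞 K))) < 14 := by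
    rw [← Nat.card_eq_fintype_card, ← Submodule.cardQuot_apply, ← Ideal.absNorm_apply]
    exact_mod_cast hnorm.trans_lt h.minkowskiBound_lt
  have hroot : (Ideal.Quotient.mk (I : Ideal (𝓞 K)) θ) ^ 5 = 2 := by
    rw [← map_pow, h.pow_five, map_ofNat]
  have hgen := fifth_root_of_card_lt_fourteen hroot hcard
  simp only [← map_one (Ideal.Quotient.mk (I : Ideal (𝓞 K))), ← map_pow, ← map_add, ← map_sub,
    Ideal.Quotient.eq_zero_iff_mem] at hgen
  rcases hgen with hg | hg | hg | hg | hg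
  all_goals refine isPrincipal_of_mem_of_natAbs_norm_prime hI.ne_top hg ?_
  · rw [h.norm_theta]; norm_num
  · rw [h.norm_one_add_theta]; norm_num
  · rw [h.norm_one_add_sq]; norm_num
  · rw [h.norm_one_add_theta_add_sq]; norm_num
  · rw [h.norm_one_add_cube_sub_fourth]; norm_num

end IsFifthRootTwo

/-- The cofactor of `1 + θ` in `1 + θ ^ 5`. For `θ ^ 5 = 2` it is a prime above `3`. -/
def cofactor {R : Type*} [CommRing R] (θ : R) : R := 1 - θ + θ ^ 2 - θ ^ 3 + θ ^ 4

theorem one_add_mul_cofactor {R : Type*} [CommRing R] (θ : R) :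
    (1 + θ) * cofactor θ = 1 + θ ^ 5 := by
  simp only [cofactor]
  ring

namespace QuinticInt

/-- Divisibility by `θ ^ 11` in `ℤ[θ]`, read off the coordinates. -/
def IsSmall (x : QuinticInt) : Prop := 8 ∣ x.c0 ∧ 4 ∣ x.c1 ∧ 4 ∣ x.c2 ∧ 4 ∣ x.c3 ∧ 4 ∣ x.c4

instance : DecidablePred IsSmall := fun x => by unfold IsSmall; infer_instance

/-- Representatives `(-1) ^ i * (θ - 1) ^ j * (θ ^ 3 + θ ^ 2 - 1) ^ k` of the units modulo
squares. -/
def unit (i j k : Fin 2) : QuinticInt :=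
  ⟨-1, 0, 0, 0, 0⟩ ^ (i : ℕ) * ⟨-1, 1, 0, 0, 0⟩ ^ (j : ℕ) * ⟨-1, 0, 1, 1, 0⟩ ^ (k : ℕ)

/-- Representatives, modulo squares, of the elements whose prime factors divide
`5 * cofactor θ`: the prime above `5` is `1 + θ ^ 2`. -/
def sUnit (i j k l m : Fin 2) : QuinticInt :=
  unit i j k * ⟨1, -1, 1, -1, 1⟩ ^ (l : ℕ) * ⟨1, 0, 1, 0, 0⟩ ^ (m : ℕ)

/-- Representatives, modulo `θ ^ 6`, of the elements congruent to `1` modulo `θ`. -/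
def oneAddDigits (a b c d e : Fin 2) : QuinticInt := ⟨1 + 2 * e, a, b, c, d⟩

theorem units_independent : ∀ i j k i' j' k' a b c d e : Fin 2,
    IsSmall (unit i j k - unit i' j' k' * oneAddDigits a b c d e ^ 2) →
      i = i' ∧ j = j' ∧ k = k' := by decide +kernel

theorem sUnits_independent : ∀ i j k l m a b c d e : Fin 2,
    IsSmall (1 - sUnit i j k l m * oneAddDigits a b c d e ^ 2) →
      i = 0 ∧ j = 0 ∧ k = 0 ∧ l = 0 ∧ m = 0 := by decide +kernel

section CommRing

variable {R : Type*} [CommRing R] {θ : R}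

theorem eval_unit (hθ : θ ^ 5 = 2) (i j k : Fin 2) :
    eval θ (unit i j k) =
      (-1) ^ (i : ℕ) * (θ - 1) ^ (j : ℕ) * (θ ^ 3 + θ ^ 2 - 1) ^ (k : ℕ) := by
  have hminus : eval θ ⟨-1, 0, 0, 0, 0⟩ = -1 := by simp [eval]
  have hroot : eval θ ⟨-1, 1, 0, 0, 0⟩ = θ - 1 := by simp [eval, neg_add_eq_sub]
  have hcubic : eval θ ⟨-1, 0, 1, 1, 0⟩ = θ ^ 3 + θ ^ 2 - 1 := by
    simp only [eval, Int.cast_neg, Int.cast_one, Int.cast_zero]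
    ring
  rw [unit, eval_mul hθ, eval_mul hθ, eval_pow hθ, eval_pow hθ, eval_pow hθ, hminus, hroot, hcubic]

theorem isUnit_eval_unit (hθ : θ ^ 5 = 2) (i j k : Fin 2) : IsUnit (eval θ (unit i j k)) := by
  rw [eval_unit hθ]
  have hroot : IsUnit (θ - 1) :=
    .of_mul_eq_one (1 + θ + θ ^ 2 + θ ^ 3 + θ ^ 4) (by linear_combination hθ)
  have hcubic : IsUnit (θ ^ 3 + θ ^ 2 - 1) :=
    .of_mul_eq_one (-1 + θ ^ 2 - θ ^ 3 + θ ^ 4) (by linear_combination θ ^ 2 * hθ)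
  exact ((isUnit_one.neg.pow _).mul (hroot.pow _)).mul (hcubic.pow _)

theorem eval_sUnit (hθ : θ ^ 5 = 2) (i j k l m : Fin 2) :
    eval θ (sUnit i j k l m) =
      eval θ (unit i j k) * cofactor θ ^ (l : ℕ) * (1 + θ ^ 2) ^ (m : ℕ) := by
  have hthree : eval θ ⟨1, -1, 1, -1, 1⟩ = cofactor θ := by
    simp only [eval, cofactor, Int.cast_neg, Int.cast_one]
    ring
  have hfive : eval θ ⟨1, 0, 1, 0, 0⟩ = 1 + θ ^ 2 := by simp [eval]
  rw [sUnit, eval_mul hθ, eval_mul hθ, eval_pow hθ, eval_pow hθ, hthree, hfive]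

theorem two_dvd_of_dvd_intCast (hθ : θ ^ 5 = 2) (hunit : ¬ IsUnit θ) {c : ℤ} (hc : θ ∣ (c : R)) :
    2 ∣ c := by
  by_contra hodd
  obtain ⟨d, rfl⟩ := Int.not_even_iff_odd.mp (even_iff_two_dvd.not.mpr hodd)
  have htwo : θ ∣ 2 := hθ ▸ dvd_pow_self θ (by norm_num)
  have hone : θ ∣ ((2 * d + 1 : ℤ) : R) - 2 * d := dvd_sub hc (htwo.mul_right _)
  exact hunit (isUnit_of_dvd_one (by simpa using hone))

variable [IsDomain R]

theorem exists_shift_of_dvd_eval (hθ : θ ^ 5 = 2) (hprime : Prime θ) {x : QuinticInt} {n : ℕ}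
    (hx : θ ^ (n + 1) ∣ eval θ x) :
    ∃ d : ℤ, x.c0 = 2 * d ∧ θ ^ n ∣ eval θ ⟨x.c1, x.c2, x.c3, x.c4, d⟩ := by
  have hc0 : θ ∣ (x.c0 : R) := by
    have htail : (x.c0 : R) =
        eval θ x - θ * (x.c1 + x.c2 * θ + x.c3 * θ ^ 2 + x.c4 * θ ^ 3) := by
      simp only [eval]
      ring
    rw [htail]
    exact dvd_sub ((dvd_pow_self θ n.succ_ne_zero).trans hx) (dvd_mul_right _ _)
  obtain ⟨d, hd⟩ := two_dvd_of_dvd_intCast hθ hprime.not_isUnit hc0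
  have hshift : eval θ x = θ * eval θ ⟨x.c1, x.c2, x.c3, x.c4, d⟩ := by
    simp only [eval, hd]
    push_cast
    linear_combination -(d : R) * hθ
  rw [hshift, pow_succ'] at hx
  exact ⟨d, hd, (mul_dvd_mul_iff_left hprime.ne_zero).mp hx⟩

theorem isSmall_of_dvd (hθ : θ ^ 5 = 2) (hprime : Prime θ) {x : QuinticInt}
    (hx : θ ^ 11 ∣ eval θ x) : IsSmall x := by
  obtain ⟨a0, h0, hx⟩ := exists_shift_of_dvd_eval hθ hprime hx
  obtain ⟨a1, h1, hx⟩ := exists_shift_of_dvd_eval hθ hprime hx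
  obtain ⟨a2, h2, hx⟩ := exists_shift_of_dvd_eval hθ hprime hx
  obtain ⟨a3, h3, hx⟩ := exists_shift_of_dvd_eval hθ hprime hx
  obtain ⟨a4, h4, hx⟩ := exists_shift_of_dvd_eval hθ hprime hx
  obtain ⟨b0, k0, hx⟩ := exists_shift_of_dvd_eval hθ hprime hx
  obtain ⟨b1, k1, hx⟩ := exists_shift_of_dvd_eval hθ hprime hx
  obtain ⟨b2, k2, hx⟩ := exists_shift_of_dvd_eval hθ hprime hx
  obtain ⟨b3, k3, hx⟩ := exists_shift_of_dvd_eval hθ hprime hx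
  obtain ⟨b4, k4, hx⟩ := exists_shift_of_dvd_eval hθ hprime hx
  obtain ⟨c0, l0, -⟩ := exists_shift_of_dvd_eval hθ hprime hx
  simp only at *
  refine ⟨?_, ?_, ?_, ?_, ?_⟩ <;> omega

end CommRing

end QuinticInt

section Digits

variable {R : Type*} [CommRing R] {θ : R}

theorem exists_digit (hres : ∀ x, θ ∣ x ∨ θ ∣ x - 1) (x : R) :
    ∃ (a : Fin 2) (y : R), x = ((a : ℕ) : ℤ) + θ * y := by
  rcases hres x with ⟨y, hy⟩ | ⟨y, hy⟩
  · exact ⟨0, y, by simp [hy]⟩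
  · exact ⟨1, y, by simp [← hy]⟩

theorem exists_oneAddDigits (hθ : θ ^ 5 = 2) (hres : ∀ x, θ ∣ x ∨ θ ∣ x - 1) {x : R}
    (hx : θ ∣ x - 1) :
    ∃ a b c d e : Fin 2, θ ^ 6 ∣ x - (QuinticInt.oneAddDigits a b c d e).eval θ := by
  obtain ⟨x1, hx1⟩ := hx
  obtain ⟨a, x2, hx2⟩ := exists_digit hres x1
  obtain ⟨b, x3, hx3⟩ := exists_digit hres x2
  obtain ⟨c, x4, hx4⟩ := exists_digit hres x3
  obtain ⟨d, x5, hx5⟩ := exists_digit hres x4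
  obtain ⟨e, y, hy⟩ := exists_digit hres x5
  refine ⟨a, b, c, d, e, y, ?_⟩
  rw [eq_add_of_sub_eq hx1, hx2, hx3, hx4, hx5, hy]
  simp only [QuinticInt.eval, QuinticInt.oneAddDigits]
  push_cast
  linear_combination (e : R) * hθ

theorem pow_eleven_dvd_sq_sub_sq (hθ : θ ^ 5 = 2) {x y : R} (hxy : θ ^ 6 ∣ x - y) :
    θ ^ 11 ∣ x ^ 2 - y ^ 2 := by
  obtain ⟨z, hz⟩ := hxy
  refine ⟨z * (y + θ * z), ?_⟩
  rw [eq_add_of_sub_eq hz]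
  linear_combination -(θ ^ 6 * y * z) * hθ

theorem QuinticInt.eq_of_eval_unit_eq_mul_sq [IsDomain R] (hθ : θ ^ 5 = 2) (hprime : Prime θ)
    (hres : ∀ x, θ ∣ x ∨ θ ∣ x - 1) {i j k i' j' k' : Fin 2} {v : R} (hv : IsUnit v)
    (h : eval θ (unit i j k) = eval θ (unit i' j' k') * v ^ 2) :
    i = i' ∧ j = j' ∧ k = k' := by
  have hv1 : θ ∣ v - 1 :=
    (hres v).resolve_left fun hd => hprime.not_isUnit (isUnit_of_dvd_unit hd hv)
  obtain ⟨a, b, c, d, e, hd⟩ := exists_oneAddDigits hθ hres hv1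
  refine units_independent i j k i' j' k' a b c d e (isSmall_of_dvd hθ hprime ?_)
  rw [eval_sub, h, eval_mul hθ, eval_pow hθ, ← mul_sub]
  exact (pow_eleven_dvd_sq_sub_sq hθ hd).mul_left _

end Digits

section Units

variable {K : Type*} [Field K] [NumberField K]

theorem exists_unit_eq_prod_mul_sq (hodd : Odd (Module.finrank ℚ K)) (u : (𝓞 K)ˣ) :
    ∃ (i : Fin 2) (f : Fin (Units.rank K) → Fin 2) (v : (𝓞 K)ˣ),
      u = (-1) ^ (i : ℕ) * (∏ t, Units.fundSystem K t ^ (f t : ℕ)) * v ^ 2 := by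
  have sign_eq (ζ : Units.torsion K) : ∃ i : Fin 2, (ζ : (𝓞 K)ˣ) = (-1) ^ (i : ℕ) := by
    rcases Units.torsion_eq_one_or_neg_one_of_odd_finrank hodd ζ with h | h
    · exact ⟨0, by simp [h]⟩
    · exact ⟨1, by simp [h]⟩
  have parity (n : ℤ) : ∃ (a : Fin 2) (m : ℤ), n = (a : ℕ) + m * 2 := by
    obtain ⟨m, hm | hm⟩ := Int.even_or_odd' n
    · exact ⟨0, m, by simp [hm, mul_comm]⟩
    · exact ⟨1, m, by simp [hm, mul_comm, add_comm]⟩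
  obtain ⟨⟨ζ, n⟩, hu, -⟩ := Units.exist_unique_eq_mul_prod K u
  obtain ⟨i, hi⟩ := sign_eq ζ
  choose f m hf using fun t => parity (n t)
  refine ⟨i, f, ∏ t, Units.fundSystem K t ^ m t, ?_⟩
  rw [hu, hi, mul_assoc, ← Finset.prod_pow, ← Finset.prod_mul_distrib]
  congr 1
  refine Finset.prod_congr rfl fun t _ => ?_
  rw [show (ζ, n).2 t = _ from hf t, zpow_add, zpow_natCast, zpow_mul, zpow_ofNat]

/-- The units modulo squares have order at most `2 ^ (rank + 1)`, so a family of that many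
pairwise inequivalent units exhausts them. -/
theorem exists_unit_eq_mul_sq (hodd : Odd (Module.finrank ℚ K)) {ι : Type*} [Fintype ι]
    (hι : Fintype.card ι = 2 ^ (Units.rank K + 1)) {E : ι → (𝓞 K)ˣ}
    (hE : ∀ i j v, E i = E j * v ^ 2 → i = j) (u : (𝓞 K)ˣ) : ∃ i v, u = E i * v ^ 2 := by
  choose i f v huv using exists_unit_eq_prod_mul_sq hodd (K := K)
  let Φ (x : (𝓞 K)ˣ) : Fin 2 × (Fin (Units.rank K) → Fin 2) := (i x, f x)
  have eq_mul_sq {x y : (𝓞 K)ˣ} (hxy : Φ x = Φ y) : ∃ w, x = y * w ^ 2 := by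
    obtain ⟨hi, hf⟩ := Prod.mk.inj hxy
    have hx := huv x
    rw [hi, hf] at hx
    have mul_sq_eq (c a b : (𝓞 K)ˣ) : c * a ^ 2 = c * b ^ 2 * (a / b) ^ 2 := by
      rw [div_pow, mul_assoc, mul_div_cancel]
    exact ⟨v x / v y, (hx.trans (mul_sq_eq _ _ (v y))).trans (by rw [← huv y])⟩
  have hinj : Function.Injective (Φ ∘ E) := fun a b hab =>
    let ⟨w, hw⟩ := eq_mul_sq hab
    hE a b w hw
  obtain ⟨a, ha⟩ := (hinj.bijective_of_nat_card_le (by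
    simp [hι, pow_succ'])).surjective (Φ u)
  exact ⟨a, eq_mul_sq ha.symm⟩

end Units

namespace IsFifthRootTwo

variable {K : Type*} [Field K] [NumberField K] {θ : 𝓞 K} (h : IsFifthRootTwo θ)
include h

theorem prime : Prime θ := prime_of_natAbs_norm_prime (by rw [h.norm_theta]; norm_num)

theorem prime_one_add_sq : Prime (1 + θ ^ 2) :=
  prime_of_natAbs_norm_prime (by rw [h.norm_one_add_sq]; norm_num)

theorem dvd_or_dvd_sub_one (x : 𝓞 K) : θ ∣ x ∨ θ ∣ x - 1 :=
  dvd_or_dvd_sub_one_of_natAbs_norm_eq_two (by rw [h.norm_theta]; norm_num) x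

theorem one_add_mul_cofactor_eq_three : (1 + θ) * cofactor θ = 3 := by
  rw [one_add_mul_cofactor, h.pow_five]
  norm_num

theorem norm_cofactor : Algebra.norm ℤ (cofactor θ) = 81 := by
  simpa [QuinticInt.eval, cofactor, sub_eq_add_neg] using
    (h.norm_eval ⟨1, -1, 1, -1, 1⟩).trans (by decide +kernel)

theorem absNorm_eq_of_dvd_cofactor {p : 𝓞 K} (hp : Prime p) (hdvd : p ∣ cofactor θ) :
    (Algebra.norm ℤ p).natAbs = 81 := by
  have hnorm : (Algebra.norm ℤ p).natAbs ∣ 81 := by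
    simpa [h.norm_cofactor] using Int.natAbs_dvd_natAbs.mpr (map_dvd (Algebra.norm ℤ) hdvd)
  have hmax : (Ideal.span {p}).IsMaximal :=
    ((Ideal.span_singleton_prime hp.ne_zero).mpr hp).isMaximal (by simpa using hp.ne_zero)
  let _ : Field (𝓞 K ⧸ Ideal.span {p}) := Ideal.Quotient.field _
  have hcard := natCard_quotient_span_singleton p
  have : Finite (𝓞 K ⧸ Ideal.span {p}) :=
    Nat.finite_of_card_ne_zero (by rw [hcard]; exact ne_zero_of_dvd_ne_zero (by norm_num) hnorm)
  let _ := Fintype.ofFinite (𝓞 K ⧸ Ideal.span {p})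
  rw [Nat.card_eq_fintype_card] at hcard
  rw [← hcard]
  refine card_eq_eighty_one_of_fifth_root (β := Ideal.Quotient.mk _ θ) ?_ (hcard ▸ hnorm) ?_
  · rw [← map_pow, h.pow_five, map_ofNat]
  · simpa only [cofactor, map_add, map_sub, map_pow, map_one] using
      (Ideal.Quotient.eq_zero_iff_dvd _ _).mpr hdvd

theorem prime_cofactor : Prime (cofactor θ) := by
  have := h.isPrincipalIdealRing
  have hnonzero : cofactor θ ≠ 0 := by
    rw [← Algebra.norm_ne_zero_iff (R := ℤ), h.norm_cofactor]
    norm_num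
  have hnonunit : ¬ IsUnit (cofactor θ) := fun hunit => by
    have := hunit.map (Algebra.norm ℤ)
    rw [h.norm_cofactor] at this
    exact absurd this (by decide)
  obtain ⟨p, hp, c, hc⟩ := WfDvdMonoid.exists_irreducible_factor hnonunit hnonzero
  have hnorm := congrArg (fun x => (Algebra.norm ℤ x).natAbs) hc
  simp only [h.norm_cofactor, map_mul, Int.natAbs_mul,
    h.absNorm_eq_of_dvd_cofactor hp.prime ⟨c, hc⟩] at hnorm
  have hunit : IsUnit c := by
    rw [← Ideal.span_singleton_eq_top, ← Ideal.absNorm_eq_one_iff, Ideal.absNorm_span_singleton]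
    omega
  rw [hc]
  exact (associated_mul_unit_right p c hunit).prime hp.prime

theorem exists_eq_eval_unit_mul_sq {u : 𝓞 K} (hu : IsUnit u) :
    ∃ (i j k : Fin 2) (v : 𝓞 K), u = (QuinticInt.unit i j k).eval θ * v ^ 2 := by
  have hrank : Units.rank K = 2 := by
    rw [Units.rank, InfinitePlace.card_eq_nrRealPlaces_add_nrComplexPlaces,
      h.nrRealPlaces_eq_one, h.nrComplexPlaces_eq_two]
  obtain ⟨⟨i, j, k⟩, v, hv⟩ := exists_unit_eq_mul_sq (by rw [h.finrank]; decide)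
    (ι := Fin 2 × Fin 2 × Fin 2) (by simp [hrank])
    (E := fun c => (QuinticInt.isUnit_eval_unit h.pow_five c.1 c.2.1 c.2.2).unit)
    (fun ⟨i, j, k⟩ ⟨i', j', k'⟩ v hv => by
      obtain ⟨rfl, rfl, rfl⟩ := QuinticInt.eq_of_eval_unit_eq_mul_sq h.pow_five h.prime
        h.dvd_or_dvd_sub_one v.isUnit (congrArg Units.val hv)
      rfl) hu.unit
  exact ⟨i, j, k, v, congrArg Units.val hv⟩

end IsFifthRootTwo

section Squarefree

variable {R : Type*} [CommRing R]

theorem exists_squarefree_mul_sq [WfDvdMonoid R] {z : R} (hz : z ≠ 0) :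
    ∃ s y : R, z = s * y ^ 2 ∧ Squarefree s := by
  induction z using IsWellFounded.induction (DvdNotUnit (α := R)) with
  | ind z ih =>
    by_cases hs : Squarefree z
    · exact ⟨z, 1, by ring, hs⟩
    · obtain ⟨x, ⟨c, hc⟩, hx⟩ : ∃ x, x * x ∣ z ∧ ¬ IsUnit x := by
        simpa only [Squarefree, not_forall, exists_prop] using hs
      have hc0 : c ≠ 0 := right_ne_zero_of_mul (hc ▸ hz)
      obtain ⟨s, y, hy, hs⟩ := ih c ⟨hc0, x * x, fun h => hx (isUnit_of_mul_isUnit_left h),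
        by rw [hc, mul_comm]⟩ hc0
      exact ⟨s, x * y, by rw [hc, hy]; ring, hs⟩

theorem exists_eq_mul_pow_of_squarefree {s p : R} (hs : Squarefree s) (hp : Prime p) :
    ∃ (i : Fin 2) (r : R), s = r * p ^ (i : ℕ) ∧ ¬ p ∣ r ∧ Squarefree r := by
  by_cases hps : p ∣ s
  · obtain ⟨r, rfl⟩ := hps
    exact ⟨1, r, by simp [mul_comm], fun hr => hp.not_isUnit (hs p (mul_dvd_mul_left p hr)),
      hs.squarefree_of_dvd (dvd_mul_left r p)⟩
  · exact ⟨0, s, by simp, hps, hs⟩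

theorem dvd_of_dvd_of_mul_eq_sq [IsDomain R] {s W t p : R} (hs : Squarefree s) (hst : s * W = t ^ 2)
    (hp : Prime p) (hps : p ∣ s) : p ∣ W := by
  obtain ⟨r, hr⟩ : p ∣ t := hp.dvd_of_dvd_pow (n := 2) (hst ▸ hps.mul_right _)
  obtain ⟨s', rfl⟩ := hps
  have hdvd : p ∣ s' * W := ⟨r ^ 2, mul_left_cancel₀ hp.ne_zero (by
    rw [← mul_assoc, hst, hr]; ring)⟩
  exact (hp.dvd_or_dvd hdvd).resolve_left fun hp' =>
    hp.not_isUnit (hs p (mul_dvd_mul_left p hp'))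

end Squarefree

namespace IsFifthRootTwo

variable {K : Type*} [Field K] [NumberField K] {θ : 𝓞 K} (h : IsFifthRootTwo θ)
include h

theorem five_dvd_one_add_sq_pow : 5 ∣ (1 + θ ^ 2) ^ 5 :=
  ⟨1 + 4 * θ + θ ^ 2 + 2 * θ ^ 3 + 2 * θ ^ 4, by
    linear_combination (2 + θ ^ 5 + 10 * θ + 5 * θ ^ 3) * h.pow_five⟩

theorem prime_dvd_of_dvd_ten_mul_cofactor {p : 𝓞 K} (hp : Prime p)
    (hd : p ∣ 10 * cofactor θ) : p ∣ θ ∨ p ∣ 1 + θ ^ 2 ∨ p ∣ cofactor θ := by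
  rw [show (10 : 𝓞 K) = θ ^ 5 * 5 by rw [h.pow_five]; norm_num] at hd
  rcases hp.dvd_or_dvd hd with hd | hd
  · rcases hp.dvd_or_dvd hd with hd | hd
    · exact Or.inl (hp.dvd_of_dvd_pow hd)
    · exact Or.inr (Or.inl (hp.dvd_of_dvd_pow (hd.trans h.five_dvd_one_add_sq_pow)))
  · exact Or.inr (Or.inr hd)

theorem exists_eq_sUnit_mul_of_squarefree {s : 𝓞 K} (hs : Squarefree s)
    (hprimes : ∀ p, Prime p → p ∣ s → p ∣ 10 * cofactor θ) :
    ∃ (i j k l m n : Fin 2) (v : 𝓞 K),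
      s = (QuinticInt.sUnit i j k l m).eval θ * θ ^ (n : ℕ) * v ^ 2 := by
  have := h.isPrincipalIdealRing
  obtain ⟨n, r₁, rfl, hr₁, hs₁⟩ := exists_eq_mul_pow_of_squarefree hs h.prime
  obtain ⟨m, r₂, rfl, hr₂, hs₂⟩ := exists_eq_mul_pow_of_squarefree hs₁ h.prime_one_add_sq
  obtain ⟨l, r₃, rfl, hr₃, hs₃⟩ := exists_eq_mul_pow_of_squarefree hs₂ h.prime_cofactor
  have hunit : IsUnit r₃ := by
    by_contra hunit
    obtain ⟨p, hpi, hpd⟩ := WfDvdMonoid.exists_irreducible_factor hunit hs₃.ne_zero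
    have hp := hpi.prime
    have dvd_of {q : 𝓞 K} (hq : Prime q) (hpq : p ∣ q) : q ∣ r₃ :=
      (hp.associated_of_dvd hq hpq).symm.dvd.trans hpd
    rcases h.prime_dvd_of_dvd_ten_mul_cofactor hp
      (hprimes p hp ((hpd.mul_right _).mul_right _ |>.mul_right _)) with hd | hd | hd
    · exact hr₁ (((dvd_of h.prime hd).mul_right _).mul_right _)
    · exact hr₂ ((dvd_of h.prime_one_add_sq hd).mul_right _)
    · exact hr₃ (dvd_of h.prime_cofactor hd)
  obtain ⟨i, j, k, v, rfl⟩ := h.exists_eq_eval_unit_mul_sq hunit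
  refine ⟨i, j, k, l, m, n, v, ?_⟩
  rw [QuinticInt.eval_sUnit h.pow_five]
  ring

theorem exists_eq_sUnit_mul_sq {z W v t : 𝓞 K} (hz : z ≠ 0) (hv : v ≠ 0)
    (ht : z * W * v ^ 2 = t ^ 2)
    (hprimes : ∀ p, Prime p → p ∣ z → p ∣ W → p ∣ 10 * cofactor θ) :
    ∃ (i j k l m n : Fin 2) (y : 𝓞 K),
      z = (QuinticInt.sUnit i j k l m).eval θ * θ ^ (n : ℕ) * y ^ 2 := by
  obtain ⟨s, y, rfl, hs⟩ := exists_squarefree_mul_sq hz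
  have hy : y ≠ 0 := by rintro rfl; simp at hz
  obtain ⟨t', rfl⟩ : y * v ∣ t := by
    rw [← IsIntegrallyClosed.pow_dvd_pow_iff two_ne_zero, ← ht]
    exact ⟨s * W, by ring⟩
  have ht' : s * W = t' ^ 2 := by
    have : (y * v) ^ 2 ≠ 0 := pow_ne_zero _ (mul_ne_zero hy hv)
    exact mul_left_cancel₀ this (by linear_combination ht)
  obtain ⟨i, j, k, l, m, n, w, hw⟩ := h.exists_eq_sUnit_mul_of_squarefree hs fun p hp hps =>
    hprimes p hp (hps.mul_right _) (dvd_of_dvd_of_mul_eq_sq hs ht' hp hps)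
  exact ⟨i, j, k, l, m, n, w * y, by rw [hw]; ring⟩

end IsFifthRootTwo

section AdicDvd

variable {K : Type*} [Field K]

/-- For a discrete valuation `v` on `K`: `x` is `v`-integral and divisible by the `n`-th power of a
uniformizer. -/
def AdicDvd (v : Valuation K ℤᵐ⁰) (n : ℕ) (x : K) : Prop := v x ≤ WithZero.exp (-(n : ℤ))

namespace AdicDvd

variable {v : Valuation K ℤᵐ⁰} {m n k : ℕ} {x y : K}

theorem zero_iff : AdicDvd v 0 x ↔ v x ≤ 1 := by simp [AdicDvd]

theorem one_iff : AdicDvd v 1 x ↔ v x < 1 := by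
  rw [AdicDvd, ← WithZero.lt_mul_exp_iff_le WithZero.exp_ne_zero, ← WithZero.exp_add]
  simp

theorem mono (hx : AdicDvd v n x) (hmn : m ≤ n) : AdicDvd v m x :=
  hx.trans (WithZero.exp_le_exp.mpr (by omega))

theorem add (hx : AdicDvd v n x) (hy : AdicDvd v n y) : AdicDvd v n (x + y) := v.map_add_le hx hy

theorem sub (hx : AdicDvd v n x) (hy : AdicDvd v n y) : AdicDvd v n (x - y) := v.map_sub_le hx hy

theorem sub_comm_iff : AdicDvd v n (x - y) ↔ AdicDvd v n (y - x) := by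
  rw [AdicDvd, v.map_sub_swap, AdicDvd]

theorem mul (hx : AdicDvd v m x) (hy : AdicDvd v n y) (hk : k ≤ m + n) : AdicDvd v k (x * y) := by
  refine mono (n := m + n) ?_ hk
  rw [AdicDvd, map_mul, Nat.cast_add, neg_add, WithZero.exp_add]
  exact mul_le_mul' hx hy

theorem map_eq_one (hx : AdicDvd v 1 (x - 1)) : v x = 1 := by
  simpa using v.map_one_add_of_lt (one_iff.mp hx)

theorem ne_zero (hx : AdicDvd v 1 (x - 1)) : x ≠ 0 := by
  rintro rfl
  simpa using hx.map_eq_one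

theorem of_sub_one (hx : AdicDvd v 1 (x - 1)) : AdicDvd v 0 x := zero_iff.mpr hx.map_eq_one.le

theorem mul_iff (hx : AdicDvd v 1 (x - 1)) : AdicDvd v n (x * y) ↔ AdicDvd v n y := by
  rw [AdicDvd, map_mul, hx.map_eq_one, one_mul, AdicDvd]

theorem inv (hx : AdicDvd v 1 (x - 1)) : AdicDvd v 0 x⁻¹ := by
  rw [zero_iff, map_inv₀, hx.map_eq_one, inv_one]

theorem inv_sub_one (hx : AdicDvd v 1 (x - 1)) (hn : AdicDvd v n (x - 1)) :
    AdicDvd v n (x⁻¹ - 1) := by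
  rw [← hx.mul_iff, mul_sub, mul_inv_cancel₀ hx.ne_zero, mul_one, sub_comm_iff]
  exact hn

/-- The uniqueness part of Hensel's lemma for the odd root of `X ^ 2 - b X + c`. -/
theorem sub_root {b c β γ κ : K} (hx : x ^ 2 - b * x + c = 0) (hx1 : AdicDvd v 1 (x - 1))
    (hβ1 : AdicDvd v 1 (β - 1)) (hκ1 : AdicDvd v 1 (κ - 1))
    (hκ : AdicDvd v n (κ ^ 2 - β * κ + γ)) (hb : AdicDvd v n (b - β)) (hc : AdicDvd v n (c - γ)) :
    AdicDvd v n (x - κ) := by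
  have hodd : AdicDvd v 1 (x + κ - β - 1) := by
    rw [show x + κ - β - 1 = (x - 1) + (κ - 1) - (β - 1) by ring]
    exact (hx1.add hκ1).sub hβ1
  rw [← hodd.mul_iff, show (x + κ - β) * (x - κ) =
    (b - β) * x - (c - γ) - (κ ^ 2 - β * κ + γ) by linear_combination hx]
  exact ((hb.mul hx1.of_sub_one (by simp)).sub hc).sub hκ

end AdicDvd

end AdicDvd

namespace IsFifthRootTwo

variable {K : Type*} [Field K] [NumberField K] {θ : 𝓞 K} (h : IsFifthRootTwo θ)
include h

/-- The prime ideal `(θ)` of `𝓞 K`. -/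
def place : IsDedekindDomain.HeightOneSpectrum (𝓞 K) where
  asIdeal := Ideal.span {θ}
  isPrime := (Ideal.span_singleton_prime h.prime.ne_zero).mpr h.prime
  ne_bot := by simpa using h.prime.ne_zero

/-- The `θ`-adic valuation of `K`. -/
noncomputable def valuation : Valuation K ℤᵐ⁰ := h.place.valuation K

theorem adicDvd_coe_iff {n : ℕ} {a : 𝓞 K} : AdicDvd h.valuation n (a : K) ↔ θ ^ n ∣ a := by
  rw [AdicDvd, valuation, h.place.valuation_of_algebraMap, h.place.intValuation_le_pow_iff_dvd,
    place, Ideal.span_singleton_pow, Ideal.dvd_span_singleton, Ideal.mem_span_singleton]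

theorem adicDvd_coe (a : 𝓞 K) : AdicDvd h.valuation 0 (a : K) := h.adicDvd_coe_iff.mpr (by simp)

theorem exists_adicDvd_sub_coe {x : K} (hx : AdicDvd h.valuation 0 x) (n : ℕ) :
    ∃ a : 𝓞 K, AdicDvd h.valuation n (x - a) := by
  obtain ⟨a, ha⟩ := h.place.exists_valuation_sub_lt_of_integer (AdicDvd.zero_iff.mp hx)
    (Units.mk0 (WithZero.exp (-(n : ℤ))) WithZero.exp_ne_zero)
  exact ⟨a, AdicDvd.sub_comm_iff.mp ha.le⟩

theorem adicDvd_or_adicDvd_sub_one {x : K} (hx : AdicDvd h.valuation 0 x) :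
    AdicDvd h.valuation 1 x ∨ AdicDvd h.valuation 1 (x - 1) := by
  obtain ⟨a, ha⟩ := h.exists_adicDvd_sub_coe hx 1
  rcases h.dvd_or_dvd_sub_one a with hd | hd
  · have := h.adicDvd_coe_iff.mpr ((pow_one θ).symm ▸ hd)
    exact Or.inl (by simpa using ha.add this)
  · have := h.adicDvd_coe_iff.mpr ((pow_one θ).symm ▸ hd)
    exact Or.inr (by simpa using ha.add this)

theorem adicDvd_sub_one_or_of_add_of_mul {x y : K} (hs : AdicDvd h.valuation 1 (x + y - 1))
    (hm : AdicDvd h.valuation 1 (x * y)) :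
    AdicDvd h.valuation 1 (x - 1) ∨ AdicDvd h.valuation 1 (y - 1) := by
  have integral : AdicDvd h.valuation 0 x := by
    rw [AdicDvd.zero_iff]
    by_contra! hx
    have hy : h.valuation y < 1 := by
      have := AdicDvd.one_iff.mp hm
      rw [map_mul] at this
      exact lt_of_mul_lt_mul_left' (this.trans (by simpa using hx))
    have hxy := h.valuation.map_add_eq_of_lt_left (hy.trans hx)
    exact hx.ne (hs.map_eq_one.symm.trans hxy)
  rcases h.adicDvd_or_adicDvd_sub_one integral with hx | hx
  · right
    rw [show y - 1 = (x + y - 1) - x by ring]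
    exact hs.sub hx
  · exact Or.inl hx

theorem valuation_theta : h.valuation (θ : K) = WithZero.exp (-1) := by
  rw [valuation, h.place.valuation_of_algebraMap]
  exact h.place.intValuation_singleton h.prime.ne_zero rfl

theorem eq_zero_and_valuation_eq_one {n : Fin 2} {r : K}
    (hr : h.valuation ((θ : K) ^ (n : ℕ) * r ^ 2) = 1) : n = 0 ∧ h.valuation r = 1 := by
  have hr0 : h.valuation r ≠ 0 := fun h0 => by simp [h0] at hr
  rw [map_mul, map_pow, map_pow, h.valuation_theta, ← WithZero.exp_log hr0, ← WithZero.exp_nsmul,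
    ← WithZero.exp_nsmul, ← WithZero.exp_add, ← WithZero.exp_zero, WithZero.exp_inj] at hr
  simp only [nsmul_eq_mul] at hr
  have hn : n = 0 := by omega
  refine ⟨hn, ?_⟩
  rw [← WithZero.exp_log hr0, ← WithZero.exp_zero, WithZero.exp_inj]
  omega

end IsFifthRootTwo

namespace QuinticInt

theorem not_two_dvd_sUnit_c0 : ∀ i j k l m : Fin 2, ¬ 2 ∣ (sUnit i j k l m).c0 := by decide +kernel

theorem not_dvd_eval_sUnit {R : Type*} [CommRing R] [IsDomain R] {θ : R} (hθ : θ ^ 5 = 2)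
    (hprime : Prime θ) (i j k l m : Fin 2) : ¬ θ ∣ eval θ (sUnit i j k l m) := fun hd =>
  let ⟨c, hc, _⟩ := exists_shift_of_dvd_eval (n := 0) hθ hprime (by simpa using hd)
  not_two_dvd_sUnit_c0 i j k l m ⟨c, hc⟩

end QuinticInt

theorem dvd_of_dvd_mul_of_dvd_quadratic {R : Type*} [CommRing R] {A B β γ p : R}
    (hAB : IsCoprime A B) (hp : Prime p) (hpAB : p ∣ A * B)
    (hq : p ∣ A ^ 2 + β * (A * B) + γ * B ^ 2) : p ∣ γ := by
  have not_both (hA : p ∣ A) (hB : p ∣ B) : False := hp.not_isUnit (hAB.isUnit_of_dvd' hA hB)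
  rcases hp.dvd_or_dvd hpAB with hA | hB
  · have hγB : p ∣ γ * B ^ 2 :=
      (dvd_add_right (dvd_add (hA.pow two_ne_zero) (hpAB.mul_left β))).mp hq
    exact (hp.dvd_or_dvd hγB).resolve_right fun hB => not_both hA (hp.dvd_of_dvd_pow hB)
  · rw [add_assoc] at hq
    have hA : p ∣ A ^ 2 := (dvd_add_left (dvd_add (hpAB.mul_left β)
      ((hB.pow two_ne_zero).mul_left γ))).mp hq
    exact (not_both (hp.dvd_of_dvd_pow hA) hB).elim

namespace IsFifthRootTwo

variable {K : Type*} [Field K] [NumberField K] {θ : 𝓞 K} (h : IsFifthRootTwo θ)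
include h

theorem exists_coprime_fraction (x : K) :
    ∃ A B : 𝓞 K, B ≠ 0 ∧ IsCoprime A B ∧ x * B = A := by
  have := h.isPrincipalIdealRing
  obtain ⟨A, B, hAB, hx⟩ := IsFractionRing.exists_reduced_fraction (A := 𝓞 K) x
  exact ⟨A, B, nonZeroDivisors.coe_ne_zero B, isRelPrime_iff_isCoprime.mp hAB, by
    rw [← hx]; exact IsLocalization.mk'_spec K A B⟩

theorem exists_eq_sUnit_mul_sq_of_quadratic {N w : K} (hN : N ≠ 0) {β γ : 𝓞 K}
    (hw : N ^ 2 + β * N + γ = N * w ^ 2)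
    (hγ : ∀ p, Prime p → p ∣ γ → p ∣ 10 * cofactor θ) :
    ∃ (i j k l m n : Fin 2) (r : K),
      N = (QuinticInt.sUnit i j k l m).eval (θ : K) * (θ : K) ^ (n : ℕ) * r ^ 2 := by
  obtain ⟨A, B, hB, hAB, hNA⟩ := h.exists_coprime_fraction N
  obtain ⟨C, D, hD, -, hwC⟩ := h.exists_coprime_fraction w
  have hBK : (B : K) ≠ 0 := RingOfIntegers.coe_ne_zero_iff.mpr hB
  have hA : A ≠ 0 := by
    rintro rfl
    exact mul_ne_zero hN hBK (by simpa using hNA)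
  have hsq : A * B * (A ^ 2 + β * (A * B) + γ * B ^ 2) * D ^ 2 = (A * B * C) ^ 2 := by
    refine RingOfIntegers.ext ?_
    simp only [map_mul, map_add, map_pow, ← hNA, ← hwC]
    linear_combination ((N : K) * B ^ 4 * D ^ 2) * hw
  obtain ⟨i, j, k, l, m, n, y, hy⟩ := h.exists_eq_sUnit_mul_sq (mul_ne_zero hA hB) hD hsq
    fun p hp hpAB hq => hγ p hp (dvd_of_dvd_mul_of_dvd_quadratic hAB hp hpAB hq)
  refine ⟨i, j, k, l, m, n, y / B, ?_⟩
  have hyK := congrArg (fun a : 𝓞 K => (a : K)) hy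
  simp only [map_mul, map_pow, QuinticInt.coe_eval, ← hNA] at hyK
  field_simp
  linear_combination hyK

theorem adicDvd_eval (u : QuinticInt) : AdicDvd h.valuation 0 (u.eval (θ : K)) := by
  rw [← QuinticInt.coe_eval]
  exact h.adicDvd_coe _

theorem adicDvd_sUnit_sub_one (i j k l m : Fin 2) :
    AdicDvd h.valuation 1 ((QuinticInt.sUnit i j k l m).eval (θ : K) - 1) := by
  have hdvd := (h.dvd_or_dvd_sub_one _).resolve_left
    (QuinticInt.not_dvd_eval_sUnit h.pow_five h.prime i j k l m)
  rw [← pow_one θ, ← h.adicDvd_coe_iff] at hdvd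
  simpa [QuinticInt.coe_eval] using hdvd

theorem exists_adicDvd_sq_sub_oneAddDigits_sq {r : K} (hr : h.valuation r = 1) :
    ∃ a b c d e : Fin 2,
      AdicDvd h.valuation 11 (r ^ 2 - (QuinticInt.oneAddDigits a b c d e).eval (θ : K) ^ 2) := by
  have hr0 := AdicDvd.zero_iff.mpr hr.le
  obtain ⟨Y, hY⟩ := h.exists_adicDvd_sub_coe hr0 11
  have hY1 : θ ∣ Y - 1 := by
    refine (h.dvd_or_dvd_sub_one Y).resolve_left fun hd => ?_
    rw [← pow_one θ, ← h.adicDvd_coe_iff] at hd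
    have := AdicDvd.one_iff.mp (by simpa using (hY.mono (m := 1) (by norm_num)).add hd)
    exact this.ne hr
  obtain ⟨a, b, c, d, e, hdigits⟩ :=
    exists_oneAddDigits h.pow_five h.dvd_or_dvd_sub_one hY1
  have hsq := h.adicDvd_coe_iff.mpr (pow_eleven_dvd_sq_sub_sq h.pow_five hdigits)
  push_cast [QuinticInt.coe_eval] at hsq
  have hrY : AdicDvd h.valuation 11 ((r - Y) * (r + Y)) :=
    hY.mul (hr0.add (h.adicDvd_coe Y)) (by simp)
  refine ⟨a, b, c, d, e, ?_⟩
  convert hrY.add hsq using 1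
  ring

theorem exists_adicDvd_sub_sUnit {x r : K} (hx : AdicDvd h.valuation 1 (x - 1))
    {i j k l m n : Fin 2}
    (hxr : x = (QuinticInt.sUnit i j k l m).eval (θ : K) * (θ : K) ^ (n : ℕ) * r ^ 2) :
    n = 0 ∧ ∃ a b c d e : Fin 2, AdicDvd h.valuation 11
      (x - (QuinticInt.sUnit i j k l m * QuinticInt.oneAddDigits a b c d e ^ 2).eval (θ : K)) := by
  have hval : h.valuation ((θ : K) ^ (n : ℕ) * r ^ 2) = 1 := by
    rw [← hx.map_eq_one, hxr, mul_assoc, map_mul _ (QuinticInt.eval _ _),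
      (h.adicDvd_sUnit_sub_one i j k l m).map_eq_one, one_mul]
  obtain ⟨rfl, hr⟩ := h.eq_zero_and_valuation_eq_one hval
  obtain ⟨a, b, c, d, e, hdigits⟩ := h.exists_adicDvd_sq_sub_oneAddDigits_sq hr
  refine ⟨rfl, a, b, c, d, e, ?_⟩
  rw [hxr, QuinticInt.eval_mul h.coe_pow_five, QuinticInt.eval_pow h.coe_pow_five, Fin.val_zero,
    pow_zero, mul_one, ← mul_sub]
  exact (h.adicDvd_eval _).mul hdigits (by simp)

theorem exists_eq_sUnit_mul_sq_and_adicDvd {x N f w : K} (hx : AdicDvd h.valuation 1 (x - 1))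
    (hxN : x = N * f ^ 2) {β γ : 𝓞 K} (hw : N ^ 2 + β * N + γ = N * w ^ 2)
    (hγ : ∀ p, Prime p → p ∣ γ → p ∣ 10 * cofactor θ) :
    ∃ (i j k l m a b c d e : Fin 2) (r : K),
      x = (QuinticInt.sUnit i j k l m).eval (θ : K) * r ^ 2 ∧
      AdicDvd h.valuation 11 (x -
        (QuinticInt.sUnit i j k l m * QuinticInt.oneAddDigits a b c d e ^ 2).eval (θ : K)) := by
  have hN : N ≠ 0 := left_ne_zero_of_mul (hxN ▸ hx.ne_zero)
  obtain ⟨i, j, k, l, m, n, r, hr⟩ := h.exists_eq_sUnit_mul_sq_of_quadratic hN hw hγ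
  have hxr : x = (QuinticInt.sUnit i j k l m).eval (θ : K) * (θ : K) ^ (n : ℕ) * (r * f) ^ 2 := by
    rw [hxN, mul_pow, ← mul_assoc, ← hr]
  obtain ⟨rfl, a, b, c, d, e, hres⟩ := h.exists_adicDvd_sub_sUnit hx hxr
  exact ⟨i, j, k, l, m, a, b, c, d, e, r * f, by simpa using hxr, hres⟩

theorem isSmall_sub_of_adicDvd {x : K} {u u' : QuinticInt}
    (hu : AdicDvd h.valuation 11 (x - u.eval (θ : K)))
    (hu' : AdicDvd h.valuation 11 (x - u'.eval (θ : K))) : (u - u').IsSmall := by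
  refine QuinticInt.isSmall_of_dvd h.pow_five h.prime (h.adicDvd_coe_iff.mp ?_)
  rw [QuinticInt.coe_eval, QuinticInt.eval_sub, ← sub_sub_sub_cancel_left _ _ x]
  exact hu'.sub hu

theorem exists_eq_sq_of_independent {x N f w : K} (hx : AdicDvd h.valuation 1 (x - 1))
    (hxN : x = N * f ^ 2) {β γ : 𝓞 K} (hw : N ^ 2 + β * N + γ = N * w ^ 2)
    (hγ : ∀ p, Prime p → p ∣ γ → p ∣ 10 * cofactor θ)
    {u : QuinticInt} (hu : AdicDvd h.valuation 11 (x - u.eval (θ : K)))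
    (hind : ∀ i j k l m a b c d e : Fin 2,
      (u - QuinticInt.sUnit i j k l m * QuinticInt.oneAddDigits a b c d e ^ 2).IsSmall →
        i = 0 ∧ j = 0 ∧ k = 0 ∧ l = 0 ∧ m = 0) :
    ∃ r : K, x = r ^ 2 := by
  obtain ⟨i, j, k, l, m, a, b, c, d, e, r, hr, hres⟩ :=
    h.exists_eq_sUnit_mul_sq_and_adicDvd hx hxN hw hγ
  obtain ⟨rfl, rfl, rfl, rfl, rfl⟩ :=
    hind i j k l m a b c d e (h.isSmall_sub_of_adicDvd hu hres)
  exact ⟨r, by simpa [QuinticInt.eval_sUnit h.coe_pow_five, QuinticInt.eval_unit h.coe_pow_five]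
    using hr⟩

end IsFifthRootTwo

namespace QuinticInt

theorem dvd_eval_of_isSmall {R : Type*} [CommRing R] {θ : R} (hθ : θ ^ 5 = 2) {x : QuinticInt}
    (hx : IsSmall x) : θ ^ 11 ∣ eval θ x := by
  obtain ⟨⟨c0, h0⟩, ⟨c1, h1⟩, ⟨c2, h2⟩, ⟨c3, h3⟩, ⟨c4, h4⟩⟩ := hx
  refine ⟨c1 + c2 * θ + c3 * θ ^ 2 + c4 * θ ^ 3 + c0 * θ ^ 4, ?_⟩
  have hten : θ ^ 10 = 4 := by rw [show 10 = 5 * 2 from rfl, pow_mul, hθ]; norm_num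
  rw [eval, h0, h1, h2, h3, h4]
  push_cast
  linear_combination (-(θ * (c1 + c2 * θ + c3 * θ ^ 2 + c4 * θ ^ 3 + c0 * θ ^ 4))) * hten -
    (4 * c0) * hθ

theorem dvd_eval_of_two_dvd {R : Type*} [CommRing R] {θ : R} (hθ : θ ^ 5 = 2) {x : QuinticInt}
    (hx : 2 ∣ x.c0) : θ ∣ eval θ x := by
  obtain ⟨c, hc⟩ := hx
  refine ⟨x.c1 + x.c2 * θ + x.c3 * θ ^ 2 + x.c4 * θ ^ 3 + c * θ ^ 4, ?_⟩
  rw [eval, hc]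
  push_cast
  linear_combination -(c : R) * hθ

/-- The value of `κ ^ 2 - (1 + b ε) κ + c ε ^ 2`. -/
def quadratic (b c : ℤ) (ε κ : QuinticInt) : QuinticInt :=
  κ ^ 2 - ((1 - ⟨-b, 0, 0, 0, 0⟩ * ε) * κ - ⟨c, 0, 0, 0, 0⟩ * ε ^ 2)

theorem eval_quadratic {R : Type*} [CommRing R] {θ : R} (hθ : θ ^ 5 = 2) (b c : ℤ)
    (ε κ : QuinticInt) : eval θ (quadratic b c ε κ) =
      eval θ κ ^ 2 - (1 + b * eval θ ε) * eval θ κ + c * eval θ ε ^ 2 := by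
  have eval_const (z : ℤ) : eval θ ⟨z, 0, 0, 0, 0⟩ = (z : R) := by simp [eval]
  simp only [quadratic, eval_sub, eval_mul hθ, eval_pow hθ, eval_one, eval_const]
  push_cast
  ring

theorem odd_root_independent : ∀ i j k l m a b c d e : Fin 2,
    IsSmall (⟨5, 2, 2, 0, 3⟩ - sUnit i j k l m * oneAddDigits a b c d e ^ 2) →
      i = 0 ∧ j = 0 ∧ k = 0 ∧ l = 0 ∧ m = 0 := by decide +kernel

theorem not_isSmall_sub_sUnit_mul_sq : ∀ i j k l m a b c d e : Fin 2,
    ¬ IsSmall (⟨1, 2, 3, 3, 1⟩ - sUnit i j k l m * oneAddDigits a b c d e ^ 2) := by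
  decide +kernel

end QuinticInt

/-- The quartic `n ^ 4 + 2 β δ n ^ 2 + (β ^ 2 - 20) δ ^ 2 = s ^ 2` with `δ = cofactor θ`. The values
`β = 5` and `β = -10` give two genus one curves related by a `2`-isogeny. -/
def OnQuartic {K : Type*} [CommRing K] (θ : K) (β : ℤ) (n s : K) : Prop :=
  n ^ 4 + 2 * β * cofactor θ * n ^ 2 + (β ^ 2 - 20) * cofactor θ ^ 2 = s ^ 2

theorem prime_dvd_of_dvd_five_mul_cofactor_sq {R : Type*} [CommRing R] {θ p : R} (hp : Prime p)
    (hd : p ∣ 5 * cofactor θ ^ 2) : p ∣ 10 * cofactor θ := by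
  rcases hp.dvd_or_dvd hd with hd | hd
  · exact (hd.trans ⟨2, by norm_num⟩).mul_right _
  · exact (hp.dvd_of_dvd_pow hd).mul_left _

theorem coe_cofactor {K : Type*} [Field K] (θ : 𝓞 K) :
    ((cofactor θ : 𝓞 K) : K) = cofactor (θ : K) := by
  simp [cofactor]

theorem quadratic_sq_mul_root {K : Type*} [Field K] {θ : 𝓞 K} {β : ℤ} {n e ρ : K}
    (he : cofactor (θ : K) = n ^ 2 * e) (hρ : ρ ^ 2 - (1 + β * e) * ρ + 5 * e ^ 2 = 0) :
    (n ^ 2 * ρ) ^ 2 + ((-β * cofactor θ : 𝓞 K) : K) * (n ^ 2 * ρ) +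
      ((5 * cofactor θ ^ 2 : 𝓞 K) : K) = n ^ 2 * ρ * n ^ 2 := by
  simp only [map_mul, map_neg, map_intCast, map_pow, map_ofNat, coe_cofactor, he]
  linear_combination (n ^ 4) * hρ

namespace IsFifthRootTwo

variable {K : Type*} [Field K] [NumberField K] {θ : 𝓞 K} (h : IsFifthRootTwo θ)
include h

theorem adicDvd_intCast (z : ℤ) : AdicDvd h.valuation 0 (z : K) := by
  simpa using h.adicDvd_coe (z : 𝓞 K)

theorem adicDvd_pow (n : ℕ) : AdicDvd h.valuation n ((θ : K) ^ n) := by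
  simpa using h.adicDvd_coe_iff.mpr (dvd_refl (θ ^ n))

theorem adicDvd_four_pow (k : ℕ) : AdicDvd h.valuation (10 * k) ((4 : K) ^ k) := by
  have hten : (4 : K) = (θ : K) ^ 10 := by
    rw [show 10 = 5 * 2 from rfl, pow_mul, h.coe_pow_five]; norm_num
  rw [hten, ← pow_mul]
  exact h.adicDvd_pow _

theorem adicDvd_eval_of_two_dvd {x : QuinticInt} (hx : 2 ∣ x.c0) :
    AdicDvd h.valuation 1 (x.eval (θ : K)) := by
  rw [← QuinticInt.coe_eval, h.adicDvd_coe_iff, pow_one]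
  exact QuinticInt.dvd_eval_of_two_dvd h.pow_five hx

theorem exists_odd_root {b c q : K} (hq : b ^ 2 - 4 * c = q ^ 2)
    (hb : AdicDvd h.valuation 1 (b - 1)) (hc : AdicDvd h.valuation 1 c) :
    ∃ ρ : K, AdicDvd h.valuation 1 (ρ - 1) ∧ ρ ^ 2 - b * ρ + c = 0 := by
  have hsum : (b + q) / 2 + (b - q) / 2 = b := by ring
  have hprod : (b + q) / 2 * ((b - q) / 2) = c := by linear_combination hq / 4
  rcases h.adicDvd_sub_one_or_of_add_of_mul (by rwa [hsum]) (by rwa [hprod]) with hρ | hρ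
  · exact ⟨_, hρ, by linear_combination -hq / 4⟩
  · exact ⟨_, hρ, by linear_combination -hq / 4⟩

section Root

variable {β : ℤ} {n s e ρ : K}

theorem exists_odd_root_of_onQuartic (hn : n ≠ 0) (hs : OnQuartic (θ : K) β n s)
    (he : cofactor (θ : K) = n ^ 2 * e) (hodd : AdicDvd h.valuation 1 e) :
    ∃ ρ : K, AdicDvd h.valuation 1 (ρ - 1) ∧ ρ ^ 2 - (1 + β * e) * ρ + 5 * e ^ 2 = 0 := by
  have hfive : AdicDvd h.valuation 0 (5 : K) := mod_cast h.adicDvd_intCast 5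
  refine h.exists_odd_root (q := s / n ^ 2) ?_ ?_ ?_
  · rw [OnQuartic, he] at hs
    field_simp
    linear_combination hs
  · rw [add_sub_cancel_left]
    exact (h.adicDvd_intCast β).mul hodd (by simp)
  · rw [pow_two]
    exact hfive.mul (hodd.mul (k := 1) hodd (by simp)) (by simp)

theorem root_eq_sq (hn : n ≠ 0) (he : cofactor (θ : K) = n ^ 2 * e)
    (hρ1 : AdicDvd h.valuation 1 (ρ - 1)) (hρ : ρ ^ 2 - (1 + β * e) * ρ + 5 * e ^ 2 = 0)
    {u : QuinticInt} (hu : AdicDvd h.valuation 11 (ρ - u.eval (θ : K)))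
    (hind : ∀ i j k l m a b c d e : Fin 2,
      (u - QuinticInt.sUnit i j k l m * QuinticInt.oneAddDigits a b c d e ^ 2).IsSmall →
        i = 0 ∧ j = 0 ∧ k = 0 ∧ l = 0 ∧ m = 0) :
    ∃ r : K, ρ = r ^ 2 :=
  h.exists_eq_sq_of_independent (N := n ^ 2 * ρ) (f := n⁻¹) hρ1 (by field_simp)
    (quadratic_sq_mul_root he hρ) (fun _ => prime_dvd_of_dvd_five_mul_cofactor_sq) hu hind

theorem adicDvd_root_sub_eval (hρ1 : AdicDvd h.valuation 1 (ρ - 1))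
    (hρ : ρ ^ 2 - (1 + β * e) * ρ + 5 * e ^ 2 = 0) {ε κ : QuinticInt}
    (he : AdicDvd h.valuation 11 (e - ε.eval (θ : K)))
    (hε : 2 ∣ ε.c0) (hκ1 : 2 ∣ (κ - 1).c0) (hκ : (QuinticInt.quadratic β 5 ε κ).IsSmall) :
    AdicDvd h.valuation 11 (ρ - κ.eval (θ : K)) := by
  have hfive : AdicDvd h.valuation 0 (5 : K) := mod_cast h.adicDvd_intCast 5
  have hβ := h.adicDvd_intCast β
  have hε1 := h.adicDvd_eval_of_two_dvd hε
  have hε0 := hε1.mono zero_le_one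
  have he0 : AdicDvd h.valuation 0 e := by
    simpa using (he.mono (m := 0) (by norm_num)).add hε0
  refine AdicDvd.sub_root hρ hρ1 (β := 1 + β * ε.eval (θ : K)) (γ := 5 * ε.eval (θ : K) ^ 2)
    ?_ ?_ ?_ ?_ ?_
  · rw [add_sub_cancel_left]
    exact hβ.mul hε1 (by simp)
  · simpa [QuinticInt.eval_sub, QuinticInt.eval_one] using h.adicDvd_eval_of_two_dvd hκ1
  · have hsmall := h.adicDvd_coe_iff.mpr (QuinticInt.dvd_eval_of_isSmall h.pow_five hκ)
    rwa [QuinticInt.coe_eval, QuinticInt.eval_quadratic h.coe_pow_five, Int.cast_ofNat] at hsmall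
  · rw [add_sub_add_left_eq_sub, ← mul_sub]
    exact hβ.mul he (by simp)
  · rw [← mul_sub, sq_sub_sq]
    exact hfive.mul ((he0.add hε0).mul he (k := 11) (by simp)) (by simp)

end Root

end IsFifthRootTwo

theorem OnQuartic.of_neg_ten_root {K : Type*} [Field K] {θ n e r : K}
    (he : cofactor θ = n ^ 2 * e)
    (hr : (r ^ 2) ^ 2 - (1 + (-10 : ℤ) * e) * r ^ 2 + 5 * e ^ 2 = 0) :
    OnQuartic θ 5 (n * r) (n ^ 2 * r) := by
  rw [OnQuartic, he]
  push_cast at hr ⊢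
  linear_combination (n ^ 4) * hr

theorem OnQuartic.of_five_root {K : Type*} [Field K] {θ n e r : K} (he : cofactor θ = n ^ 2 * e)
    (hr : (r ^ 2) ^ 2 - (1 + (5 : ℤ) * e) * r ^ 2 + 5 * e ^ 2 = 0) :
    OnQuartic θ (-10) (2 * n * r) (4 * n ^ 2 * r) := by
  rw [OnQuartic, he]
  push_cast at hr ⊢
  linear_combination (16 * n ^ 4) * hr

namespace IsFifthRootTwo

variable {K : Type*} [Field K] [NumberField K] {θ : 𝓞 K} (h : IsFifthRootTwo θ)
include h

section Root

variable {β : ℤ} {n s e ρ ω r : K}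

theorem adicDvd_root_sub_one {m : ℕ} (hm : 1 ≤ m) (hρ1 : AdicDvd h.valuation 1 (ρ - 1))
    (hρ : ρ ^ 2 - (1 + β * e) * ρ + 5 * e ^ 2 = 0) (he : AdicDvd h.valuation m e) :
    AdicDvd h.valuation m (ρ - 1) := by
  have hfive : AdicDvd h.valuation 0 (5 : K) := mod_cast h.adicDvd_intCast 5
  have hβe : AdicDvd h.valuation m (β * e) := (h.adicDvd_intCast β).mul he (by simp)
  have hzero : AdicDvd h.valuation m 0 := by simpa using he.sub he
  refine AdicDvd.sub_root hρ hρ1 (β := 1 + β * e) (γ := 5 * e ^ 2) ?_ ?_ ?_ ?_ ?_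
  · simpa using hβe.mono hm
  · simpa using hzero.mono hm
  · rw [show (1 : K) ^ 2 - (1 + β * e) * 1 + 5 * e ^ 2 = 5 * (e * e) - β * e by ring]
    exact (hfive.mul (he.mul he (k := m) (by omega)) (by simp)).sub hβe
  · simpa using hzero
  · simpa using hzero

theorem exists_sq_root_of_onQuartic (hn : n ≠ 0) (hs : OnQuartic (θ : K) β n s)
    (he : cofactor (θ : K) = n ^ 2 * e) (he12 : AdicDvd h.valuation 12 e) :
    ∃ r : K, AdicDvd h.valuation 12 (r ^ 2 - 1) ∧
      (r ^ 2) ^ 2 - (1 + β * e) * r ^ 2 + 5 * e ^ 2 = 0 := by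
  obtain ⟨ρ, hρ1, hρ⟩ := h.exists_odd_root_of_onQuartic hn hs he (he12.mono (by norm_num))
  have hρ12 := h.adicDvd_root_sub_one (by norm_num) hρ1 hρ he12
  obtain ⟨r, rfl⟩ := h.root_eq_sq hn he hρ1 hρ (u := 1)
    (by simpa [QuinticInt.eval_one] using hρ12.mono (m := 11) (by norm_num))
    QuinticInt.sUnits_independent
  exact ⟨r, hρ12, hρ⟩

/-- The obstruction ending the descent: such a root would be an S-unit times a square, but
`1 + 2 θ + 3 θ ^ 2 + 3 θ ^ 3 + θ ^ 4` is not one modulo `θ ^ 11`. -/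
theorem not_adicDvd_root_sub (hn : n ≠ 0) (he : cofactor (θ : K) = n ^ 2 * e)
    (hρ1 : AdicDvd h.valuation 1 (ρ - 1)) (hρ : ρ ^ 2 - (1 + β * e) * ρ + 5 * e ^ 2 = 0) :
    ¬ AdicDvd h.valuation 11 (ρ - QuinticInt.eval (θ : K) ⟨1, 2, 3, 3, 1⟩) := fun hres => by
  obtain ⟨i, j, k, l, m, a, b, c, d, e', -, -, hsUnit⟩ :=
    h.exists_eq_sUnit_mul_sq_and_adicDvd (N := n ^ 2 * ρ) (f := n⁻¹) hρ1 (by field_simp)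
      (quadratic_sq_mul_root he hρ) (fun _ => prime_dvd_of_dvd_five_mul_cofactor_sq)
  exact QuinticInt.not_isSmall_sub_sUnit_mul_sq i j k l m a b c d e'
    (h.isSmall_sub_of_adicDvd hres hsUnit)

theorem adicDvd_three_mul_one_add : AdicDvd h.valuation 0 (3 * (1 + θ) : K) := by
  simpa [map_ofNat] using h.adicDvd_coe (3 * (1 + θ))

theorem adicDvd_four_pow_mul_sq_mul (k : ℕ) (hω : AdicDvd h.valuation 10 (ω - 3 * (1 + θ))) :
    AdicDvd h.valuation (10 * k + 2) (4 ^ k * (θ : K) ^ 2 * ω) := by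
  have hω0 : AdicDvd h.valuation 0 ω := by
    simpa using (hω.mono (m := 0) (by norm_num)).add h.adicDvd_three_mul_one_add
  exact ((h.adicDvd_four_pow k).mul (h.adicDvd_pow 2) le_rfl).mul hω0 le_rfl

theorem adicDvd_mul_inv_sub (hω : AdicDvd h.valuation 10 (ω - 3 * (1 + θ)))
    (hr : AdicDvd h.valuation 12 (r ^ 2 - 1)) :
    AdicDvd h.valuation 10 (ω * (r ^ 2)⁻¹ - 3 * (1 + θ)) := by
  have hr1 := hr.mono (m := 1) (by norm_num)
  rw [show ω * (r ^ 2)⁻¹ - 3 * (1 + θ) =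
    (ω - 3 * (1 + θ)) * (r ^ 2)⁻¹ + 3 * (1 + θ) * ((r ^ 2)⁻¹ - 1) by ring]
  exact (hω.mul hr1.inv le_rfl).add
    (h.adicDvd_three_mul_one_add.mul (hr1.inv_sub_one hr) (by norm_num))

end Root

/-- A point `(n, s)` with `n ≠ 0` on the quartic of parameter `β` lying `θ`-adically close to
infinity: `δ / n ^ 2` equals `4 ^ k θ ^ 2 ω` where `ω ≡ 3 (1 + θ)` modulo `θ ^ 10`. The exponent `k`
is what the descent decreases. -/
def QuarticPoint (β : ℤ) (k : ℕ) : Prop :=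
  ∃ n s ω : K, n ≠ 0 ∧ OnQuartic (θ : K) β n s ∧
    cofactor (θ : K) = n ^ 2 * (4 ^ k * (θ : K) ^ 2 * ω) ∧
    AdicDvd h.valuation 10 (ω - 3 * (1 + θ))

theorem QuarticPoint.dual {k : ℕ} (hk : h.QuarticPoint (-10) (k + 1)) :
    h.QuarticPoint 5 (k + 1) := by
  obtain ⟨n, s, ω, hn, hs, he, hω⟩ := hk
  obtain ⟨r, hr1, hr⟩ := h.exists_sq_root_of_onQuartic hn hs he
    ((h.adicDvd_four_pow_mul_sq_mul (k + 1) hω).mono (by omega))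
  have hr0 : r ≠ 0 := ne_zero_pow two_ne_zero (hr1.mono (m := 1) (by norm_num)).ne_zero
  refine ⟨n * r, n ^ 2 * r, ω * (r ^ 2)⁻¹, mul_ne_zero hn hr0, .of_neg_ten_root he hr, ?_,
    h.adicDvd_mul_inv_sub hω hr1⟩
  rw [he]
  field_simp

theorem QuarticPoint.descent {k : ℕ} (hk : h.QuarticPoint 5 (k + 1)) :
    h.QuarticPoint (-10) k := by
  obtain ⟨n, s, ω, hn, hs, he, hω⟩ := hk
  obtain ⟨r, hr1, hr⟩ := h.exists_sq_root_of_onQuartic hn hs he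
    ((h.adicDvd_four_pow_mul_sq_mul (k + 1) hω).mono (by omega))
  have hr0 : r ≠ 0 := ne_zero_pow two_ne_zero (hr1.mono (m := 1) (by norm_num)).ne_zero
  refine ⟨2 * n * r, 4 * n ^ 2 * r, ω * (r ^ 2)⁻¹, mul_ne_zero (mul_ne_zero two_ne_zero hn) hr0,
    .of_five_root he hr, ?_, h.adicDvd_mul_inv_sub hω hr1⟩
  rw [he]
  field_simp
  ring

theorem adicDvd_inv_mul_sub_eval {ρ e : K} (hρ1 : AdicDvd h.valuation 1 (ρ - 1))
    {ε ε' κ : QuinticInt} (he : AdicDvd h.valuation 11 (e - ε.eval (θ : K)))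
    (hρ : AdicDvd h.valuation 11 (ρ - κ.eval (θ : K))) (hε : (ε - ε' * κ).IsSmall) :
    AdicDvd h.valuation 11 (ρ⁻¹ * e - ε'.eval (θ : K)) := by
  have hsmall := h.adicDvd_coe_iff.mpr (QuinticInt.dvd_eval_of_isSmall h.pow_five hε)
  rw [QuinticInt.coe_eval, QuinticInt.eval_sub, QuinticInt.eval_mul h.coe_pow_five] at hsmall
  rw [← hρ1.mul_iff, mul_sub, mul_inv_cancel_left₀ hρ1.ne_zero]
  convert (he.add hsmall).sub ((h.adicDvd_eval ε').mul hρ (k := 11) (by simp)) using 1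
  ring

/-- Passing once more to the isogenous quartic `β = 5`, the odd root `σ` of its quadratic violates
`not_adicDvd_root_sub`. -/
theorem not_onQuartic_of_adicDvd {n s e : K} (hn : n ≠ 0) (he : cofactor (θ : K) = n ^ 2 * e)
    (hres : AdicDvd h.valuation 11 (e - QuinticInt.eval (θ : K) ⟨0, 0, 3, 3, 0⟩)) :
    ¬ OnQuartic (θ : K) (-10) n s := fun hs => by
  have adicDvd_of_res {e : K} {ε : QuinticInt} (hres : AdicDvd h.valuation 11 (e - ε.eval (θ : K)))
      (hε : 2 ∣ ε.c0) : AdicDvd h.valuation 1 e := by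
    simpa using (hres.mono (m := 1) (by norm_num)).add (h.adicDvd_eval_of_two_dvd hε)
  obtain ⟨ρ, hρ1, hρ⟩ := h.exists_odd_root_of_onQuartic hn hs he (adicDvd_of_res hres (by decide))
  have hρres : AdicDvd h.valuation 11 (ρ - QuinticInt.eval (θ : K) ⟨5, 2, 2, 0, 3⟩) :=
    h.adicDvd_root_sub_eval hρ1 hρ hres (by decide) (by decide) (by decide +kernel)
  obtain ⟨r, rfl⟩ := h.root_eq_sq hn he hρ1 hρ hρres QuinticInt.odd_root_independent
  have hr0 : r ≠ 0 := ne_zero_pow two_ne_zero hρ1.ne_zero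
  have hnr : n * r ≠ 0 := mul_ne_zero hn hr0
  have he' : cofactor (θ : K) = (n * r) ^ 2 * ((r ^ 2)⁻¹ * e) := by
    rw [he]
    field_simp
  have hres' : AdicDvd h.valuation 11
      ((r ^ 2)⁻¹ * e - QuinticInt.eval (θ : K) ⟨0, 2, 1, 1, 0⟩) :=
    h.adicDvd_inv_mul_sub_eval hρ1 hres hρres (by decide +kernel)
  obtain ⟨σ, hσ1, hσ⟩ := h.exists_odd_root_of_onQuartic hnr (.of_neg_ten_root he hρ) he'
    (adicDvd_of_res hres' (by decide))
  exact h.not_adicDvd_root_sub hnr he' hσ1 hσ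
    (h.adicDvd_root_sub_eval hσ1 hσ hres' (by decide) (by decide) (by decide +kernel))

theorem not_quarticPoint_zero : ¬ h.QuarticPoint (-10) 0 := by
  rintro ⟨n, s, ω, hn, hs, he, hω⟩
  refine h.not_onQuartic_of_adicDvd hn he ?_ hs
  have hres := (h.adicDvd_pow 2).mul hω (k := 11) (by norm_num)
  convert hres using 1
  simp only [QuinticInt.eval, pow_zero, Int.cast_zero, Int.cast_ofNat]
  ring

theorem not_quarticPoint (k : ℕ) : ¬ h.QuarticPoint 5 (k + 1) := by
  induction k with
  | zero => exact fun hk => h.not_quarticPoint_zero (hk.descent h)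
  | succ k ih => exact fun hk => ih ((hk.descent h).dual h)

end IsFifthRootTwo

section Progression

variable {a b c d : ℤ}

theorem three_dvd_sub_of_two_mul_pow_five_add_pow_five_eq (h : 2 * a ^ 5 + d ^ 5 = 3 * b ^ 2) :
    3 ∣ a - d := by
  have mod_three : ∀ a b d : ZMod 3, 2 * a ^ 5 + d ^ 5 = 3 * b ^ 2 → a - d = 0 := by decide
  refine (ZMod.intCast_zmod_eq_zero_iff_dvd (a - d) 3).mp ?_
  rw [Int.cast_sub]
  exact mod_three a b d (by exact_mod_cast congrArg (Int.cast : ℤ → ZMod 3) h)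

theorem eight_dvd_sub_one_of_pow_five_eq (ha : a ^ 5 = 2 * b ^ 2 - c ^ 2)
    (hd : d ^ 5 = 2 * c ^ 2 - b ^ 2) (hodd : ¬ (2 ∣ a ∧ 2 ∣ b)) : 8 ∣ a - 1 ∧ 8 ∣ d - 1 := by
  have mod_eight : ∀ a b c d : ZMod 8, a ^ 5 = 2 * b ^ 2 - c ^ 2 → d ^ 5 = 2 * c ^ 2 - b ^ 2 →
      a - 1 = 0 ∧ d - 1 = 0 ∨ 4 * a = 0 ∧ 4 * b = 0 := by decide +kernel
  have two_dvd_of_four_mul {z : ℤ} (hz : 4 * (z : ZMod 8) = 0) : 2 ∣ z := by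
    have := (ZMod.intCast_zmod_eq_zero_iff_dvd (4 * z) 8).mp (by push_cast; exact hz)
    omega
  rcases mod_eight a b c d (by exact_mod_cast congrArg (Int.cast : ℤ → ZMod 8) ha)
    (by exact_mod_cast congrArg (Int.cast : ℤ → ZMod 8) hd) with ⟨ha1, hd1⟩ | ⟨ha4, hb4⟩
  · exact ⟨(ZMod.intCast_zmod_eq_zero_iff_dvd (a - 1) 8).mp (by exact_mod_cast ha1),
      (ZMod.intCast_zmod_eq_zero_iff_dvd (d - 1) 8).mp (by exact_mod_cast hd1)⟩
  · exact (hodd ⟨two_dvd_of_four_mul ha4, two_dvd_of_four_mul hb4⟩).elim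

theorem isCoprime_of_two_mul_pow_five_add_pow_five_eq (hab : IsCoprime a b)
    (h : 2 * a ^ 5 + d ^ 5 = 3 * b ^ 2) : IsCoprime a d := by
  refine isRelPrime_iff_isCoprime.mp fun g hga hgd => ?_
  have hdvd : g ^ 5 ∣ 3 * b ^ 2 :=
    h ▸ dvd_add ((pow_dvd_pow_of_dvd hga 5).mul_left 2) (pow_dvd_pow_of_dvd hgd 5)
  have hgb : IsCoprime (g * g) (b ^ 2) := by
    have := (hab.of_isCoprime_of_dvd_left hga).pow_right (n := 2)
    exact this.mul_left this
  have hthree : g * g ∣ 3 :=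
    hgb.dvd_of_dvd_mul_right (Dvd.dvd.trans ⟨g ^ 3, by ring⟩ hdvd)
  exact Int.prime_three.irreducible.squarefree g hthree

/-- The local conditions which the end terms `a ^ 5`, `d ^ 5` of a primitive progression
`a ^ 5, b ^ 2, c ^ 2, d ^ 5` impose on `a` and `d`. -/
structure IsEndPair (a d : ℤ) : Prop where
  isCoprime : IsCoprime a d
  three_dvd_sub : 3 ∣ a - d
  eight_dvd_left : 8 ∣ a - 1
  eight_dvd_right : 8 ∣ d - 1

namespace IsEndPair

theorem of_progression (hab : IsCoprime a b) (h₁ : 2 * a ^ 5 + d ^ 5 = 3 * b ^ 2)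
    (h₂ : 2 * d ^ 5 + a ^ 5 = 3 * c ^ 2) : IsEndPair a d := by
  have height : 8 ∣ a - 1 ∧ 8 ∣ d - 1 :=
    eight_dvd_sub_one_of_pow_five_eq (b := b) (c := c) (by linarith) (by linarith)
      fun h => Int.prime_two.not_isUnit (hab.isUnit_of_dvd' h.1 h.2)
  exact ⟨isCoprime_of_two_mul_pow_five_add_pow_five_eq hab h₁,
    three_dvd_sub_of_two_mul_pow_five_add_pow_five_eq h₁, height.1, height.2⟩

theorem symm (h : IsEndPair a d) : IsEndPair d a :=
  ⟨h.isCoprime.symm, dvd_sub_comm.mp h.three_dvd_sub, h.eight_dvd_right, h.eight_dvd_left⟩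

theorem exists_congruences (h : IsEndPair a d) (R : Type*) [CommRing R] :
    ∃ s t m : R, (a : R) ^ 2 = 1 + 16 * s ∧ (d : R) ^ 2 = 1 + 16 * t ∧ (a : R) * d = 1 + 8 * m := by
  obtain ⟨x, hx⟩ := h.eight_dvd_left
  obtain ⟨y, hy⟩ := h.eight_dvd_right
  obtain rfl : a = 1 + 8 * x := by linarith
  obtain rfl : d = 1 + 8 * y := by linarith
  refine ⟨x + 4 * x ^ 2, y + 4 * y ^ 2, x + y + 8 * x * y, ?_, ?_, ?_⟩ <;> push_cast <;> ring

theorem odd_mul (h : IsEndPair a d) : Odd (a * d) := by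
  have hl := h.eight_dvd_left
  have hr := h.eight_dvd_right
  exact (Int.odd_iff.mpr (by omega)).mul (Int.odd_iff.mpr (by omega))

theorem exists_sq_sub_sq_eq (h : IsEndPair a d) (hne : d ≠ a) :
    ∃ (k : ℕ) (o : ℤ), Odd o ∧ d ^ 2 - a ^ 2 = 2 ^ (k + 2) * o := by
  obtain ⟨x, hx⟩ := h.eight_dvd_left
  obtain ⟨y, hy⟩ := h.eight_dvd_right
  have hfour : d ^ 2 - a ^ 2 = 4 * (4 * (y - x) * (1 + 4 * (x + y))) := by
    rw [show a = 1 + 8 * x by linarith, show d = 1 + 8 * y by linarith]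
    ring
  have hfinite : FiniteMultiplicity 2 (4 * (y - x) * (1 + 4 * (x + y))) :=
    Int.finiteMultiplicity_iff.mpr ⟨by norm_num, mul_ne_zero (by omega) (by omega)⟩
  obtain ⟨o, ho, hodd⟩ := hfinite.exists_eq_pow_mul_and_not_dvd
  exact ⟨_, o, Int.not_even_iff_odd.mp (hodd ∘ even_iff_two_dvd.mp), by rw [hfour, ho]; ring⟩

end IsEndPair

end Progression

section QuinticFactor

variable {R : Type*} [CommRing R]

/-- The cofactor of `θ a + d` in `(θ a) ^ 5 + d ^ 5`. -/
def quinticFactor (θ a d : R) : R :=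
  θ ^ 4 * a ^ 4 - θ ^ 3 * a ^ 3 * d + θ ^ 2 * a ^ 2 * d ^ 2 - θ * a * d ^ 3 + d ^ 4

theorem add_mul_quinticFactor (θ a d : R) :
    (θ * a + d) * quinticFactor θ a d = θ ^ 5 * a ^ 5 + d ^ 5 := by
  rw [quinticFactor]
  ring

theorem dvd_five_mul_pow_left {θ a d p : R} (hQ : p ∣ quinticFactor θ a d) (hθ : p ∣ 1 + θ)
    (had : p ∣ a - d) : p ∣ 5 * a ^ 4 := by
  have hcomb : 5 * a ^ 4 = quinticFactor θ a d - (1 + θ) *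
      (a ^ 4 * (θ ^ 3 - θ ^ 2 + θ - 1) - a ^ 3 * d * (θ ^ 2 - θ + 1) +
        a ^ 2 * d ^ 2 * (θ - 1) - a * d ^ 3) +
      (a - d) * (4 * a ^ 3 + 3 * a ^ 2 * d + 2 * a * d ^ 2 + d ^ 3) := by
    rw [quinticFactor]
    ring
  rw [hcomb]
  exact (hQ.sub (hθ.mul_right _)).add (had.mul_right _)

theorem dvd_five_mul_pow_right {θ a d p : R} (hQ : p ∣ quinticFactor θ a d)
    (hlin : p ∣ θ * a + d) : p ∣ 5 * d ^ 4 := by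
  have hcomb : 5 * d ^ 4 = quinticFactor θ a d - (θ * a + d) *
      (θ ^ 3 * a ^ 3 - 2 * θ ^ 2 * a ^ 2 * d + 3 * θ * a * d ^ 2 - 4 * d ^ 3) := by
    rw [quinticFactor]
    ring
  rw [hcomb]
  exact hQ.sub (hlin.mul_right _)

theorem exists_quinticFactor_eq (θ : R) {a d s t m : R} (ha : a ^ 2 = 1 + 16 * s)
    (hd : d ^ 2 = 1 + 16 * t) (hm : a * d = 1 + 8 * m) :
    ∃ r, quinticFactor θ a d = cofactor θ - 8 * m * (θ ^ 3 + θ) + 16 * r := by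
  refine ⟨θ ^ 4 * (2 * s + 16 * s ^ 2) - θ ^ 3 * s * (1 + 8 * m) + θ ^ 2 * (s + t + 16 * s * t) -
    θ * t * (1 + 8 * m) + (2 * t + 16 * t ^ 2), ?_⟩
  have hgroup : quinticFactor θ a d = θ ^ 4 * (a ^ 2) ^ 2 - θ ^ 3 * a ^ 2 * (a * d) +
      θ ^ 2 * a ^ 2 * d ^ 2 - θ * (a * d) * d ^ 2 + (d ^ 2) ^ 2 := by
    rw [quinticFactor]
    ring
  rw [hgroup, ha, hd, hm, cofactor]
  ring

end QuinticFactor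

namespace IsEndPair

variable {a d : ℤ} {R : Type*} [CommRing R]

theorem eight_dvd_quinticFactor_sub (h : IsEndPair a d) (θ : R) :
    8 ∣ quinticFactor θ (a : R) d - cofactor θ := by
  obtain ⟨s, t, m, ha, hd, hm⟩ := h.exists_congruences R
  obtain ⟨r, hr⟩ := exists_quinticFactor_eq θ ha hd hm
  exact ⟨2 * r - m * (θ ^ 3 + θ), by rw [hr]; ring⟩

theorem sixteen_dvd_quinticFactor_mul_sub (h : IsEndPair a d) (θ : R) :
    16 ∣ quinticFactor θ (a : R) d * quinticFactor θ (d : R) a - cofactor θ ^ 2 := by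
  obtain ⟨s, t, m, ha, hd, hm⟩ := h.exists_congruences R
  obtain ⟨r, hr⟩ := exists_quinticFactor_eq θ ha hd hm
  obtain ⟨r', hr'⟩ := exists_quinticFactor_eq θ hd ha ((mul_comm _ _).trans hm)
  rw [hr, hr']
  generalize cofactor θ = δ
  generalize θ ^ 3 + θ = γ
  exact ⟨δ * (r + r') - δ * m * γ + 4 * m ^ 2 * γ ^ 2 - 8 * m * γ * (r + r') + 16 * r * r',
    by ring⟩

theorem sixteen_dvd_quinticFactor_add_sub (h : IsEndPair a d) (θ : R) :
    16 ∣ quinticFactor θ (a : R) d + quinticFactor θ (d : R) a - 2 * cofactor θ := by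
  obtain ⟨s, t, m, ha, hd, hm⟩ := h.exists_congruences R
  obtain ⟨r, hr⟩ := exists_quinticFactor_eq θ ha hd hm
  obtain ⟨r', hr'⟩ := exists_quinticFactor_eq θ hd ha ((mul_comm _ _).trans hm)
  exact ⟨r + r' - m * (θ ^ 3 + θ), by rw [hr, hr']; ring⟩

theorem sixteen_dvd_sq_mul_sq_sub (h : IsEndPair a d) (θ : R) :
    16 ∣ θ ^ 2 * (a : R) ^ 2 - (d : R) ^ 2 - (θ ^ 2 - 1) := by
  obtain ⟨s, t, -, ha, hd, -⟩ := h.exists_congruences R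
  exact ⟨θ ^ 2 * s - t, by rw [ha, hd]; ring⟩

theorem sixteen_dvd_normSum_sub (h : IsEndPair a d) (θ : R) :
    16 ∣ (θ ^ 2 * (a : R) ^ 2 - d ^ 2) ^ 2 * quinticFactor θ (d : R) a +
      (θ ^ 2 * (d : R) ^ 2 - a ^ 2) ^ 2 * quinticFactor θ (a : R) d +
      2 * ((θ ^ 2 * a ^ 2 - d ^ 2) * (θ ^ 2 * d ^ 2 - a ^ 2)) * cofactor θ -
      4 * (cofactor θ * (θ ^ 2 - 1) ^ 2) := by
  obtain ⟨p, hp⟩ := h.sixteen_dvd_sq_mul_sq_sub θ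
  obtain ⟨p', hp'⟩ := h.symm.sixteen_dvd_sq_mul_sq_sub θ
  obtain ⟨w, hw⟩ := h.sixteen_dvd_quinticFactor_add_sub θ
  rw [sub_eq_iff_eq_add] at hp hp'
  rw [hp, hp']
  generalize quinticFactor θ (a : R) d = Q at hw ⊢
  generalize quinticFactor θ (d : R) a = Q' at hw ⊢
  generalize θ ^ 2 - 1 = β
  exact ⟨β ^ 2 * w + (2 * β * p + 16 * p ^ 2) * Q' + (2 * β * p' + 16 * p' ^ 2) * Q +
    2 * cofactor θ * (β * (p + p') + 16 * p * p'), by linear_combination β ^ 2 * hw⟩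

end IsEndPair

theorem coe_quinticFactor {K : Type*} [Field K] (θ : 𝓞 K) (a d : ℤ) :
    ((quinticFactor θ (a : 𝓞 K) d : 𝓞 K) : K) = quinticFactor (θ : K) a d := by
  simp [quinticFactor]

namespace IsFifthRootTwo

variable {K : Type*} [Field K] [NumberField K] {θ : 𝓞 K} (h : IsFifthRootTwo θ)
include h

theorem adicDvd_two_pow (k : ℕ) : AdicDvd h.valuation (5 * k) ((2 : K) ^ k) := by
  rw [← h.coe_pow_five, ← pow_mul]
  exact h.adicDvd_pow _

theorem adicDvd_pow_mul_iff {m n : ℕ} {x : K} :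
    AdicDvd h.valuation (m + n) ((θ : K) ^ m * x) ↔ AdicDvd h.valuation n x := by
  rw [AdicDvd, map_mul, map_pow, h.valuation_theta, ← WithZero.exp_nsmul,
    show -((m + n : ℕ) : ℤ) = m • (-1) + -(n : ℤ) by simp; ring, WithZero.exp_add,
    mul_le_mul_iff_right₀ (by simp), AdicDvd]

theorem adicDvd_coe_of_two_pow_dvd {k : ℕ} {x : 𝓞 K} (hx : 2 ^ k ∣ x) :
    AdicDvd h.valuation (5 * k) (x : K) := by
  rwa [h.adicDvd_coe_iff, pow_mul, h.pow_five]

theorem adicDvd_cofactor_sub_one : AdicDvd h.valuation 1 (cofactor (θ : K) - 1) := by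
  have hdvd : θ ^ 1 ∣ cofactor θ - 1 := ⟨-1 + θ - θ ^ 2 + θ ^ 3, by rw [cofactor]; ring⟩
  simpa [coe_cofactor] using h.adicDvd_coe_iff.mpr hdvd

section EndPair

variable {a b d : ℤ} (had : IsEndPair a d)
include had

theorem prime_dvd_ten_mul_cofactor_of_dvd {p : 𝓞 K} (hp : Prime p)
    (hz : p ∣ cofactor θ * quinticFactor θ (a : 𝓞 K) d)
    (hW : p ∣ (1 + θ) * (θ * (a : 𝓞 K) + d)) : p ∣ 10 * cofactor θ := by
  have not_both (ha : p ∣ (a : 𝓞 K)) (hd : p ∣ (d : 𝓞 K)) : False :=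
    hp.not_isUnit ((had.isCoprime.map (Int.castRingHom (𝓞 K))).isUnit_of_dvd' ha hd)
  have of_dvd_five (hd : p ∣ 5) : p ∣ 10 * cofactor θ := (hd.trans ⟨2, by norm_num⟩).mul_right _
  have of_dvd_theta (hd : p ∣ θ) : p ∣ 10 * cofactor θ :=
    (hd.trans ⟨5 * θ ^ 4, by linear_combination -5 * h.pow_five⟩).mul_right _
  rcases hp.dvd_or_dvd hz with hδ | hQ
  · exact hδ.mul_left _
  rcases hp.dvd_or_dvd hW with hone | hlin
  · have hsub : p ∣ (a : 𝓞 K) - d := by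
      have hthree : p ∣ 3 := h.one_add_mul_cofactor_eq_three ▸ hone.mul_right _
      exact hthree.trans (by simpa using map_dvd (Int.castRingHom (𝓞 K)) had.three_dvd_sub)
    rcases hp.dvd_or_dvd (dvd_five_mul_pow_left hQ hone hsub) with hfive | ha
    · exact of_dvd_five hfive
    · have ha := hp.dvd_of_dvd_pow ha
      exact (not_both ha ((dvd_sub_right ha).mp hsub)).elim
  · rcases hp.dvd_or_dvd (dvd_five_mul_pow_right hQ hlin) with hfive | hd
    · exact of_dvd_five hfive
    · have hd := hp.dvd_of_dvd_pow hd
      rcases hp.dvd_or_dvd ((dvd_add_left hd).mp hlin) with hθ | ha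
      · exact of_dvd_theta hθ
      · exact (not_both ha hd).elim

theorem adicDvd_quinticFactor_div_cofactor_sub_one :
    AdicDvd h.valuation 15 (quinticFactor (θ : K) a d / cofactor (θ : K) - 1) := by
  have hδ := h.adicDvd_cofactor_sub_one
  have hδ0 := hδ.ne_zero
  have height : (2 : 𝓞 K) ^ 3 ∣ quinticFactor θ (a : 𝓞 K) d - cofactor θ := by
    convert had.eight_dvd_quinticFactor_sub θ using 1
    norm_num
  have hsub := h.adicDvd_coe_of_two_pow_dvd height
  push_cast [coe_quinticFactor, coe_cofactor] at hsub
  rwa [← hδ.mul_iff, mul_sub, mul_div_cancel₀ _ hδ0, mul_one]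

theorem exists_quinticFactor_eq_sUnit_mul_sq (heq : 2 * a ^ 5 + d ^ 5 = 3 * b ^ 2) :
    ∃ (i j k l m n : Fin 2) (r : K), quinticFactor (θ : K) a d / cofactor (θ : K) =
      (QuinticInt.sUnit i j k l m).eval (θ : K) * (θ : K) ^ (n : ℕ) * r ^ 2 := by
  have hδ0 := h.adicDvd_cofactor_sub_one.ne_zero
  have hQ0 : quinticFactor (θ : K) a d ≠ 0 := (div_ne_zero_iff.mp
    ((h.adicDvd_quinticFactor_div_cofactor_sub_one had).mono (by norm_num)).ne_zero).1
  have hz : cofactor θ * quinticFactor θ (a : 𝓞 K) d ≠ 0 := by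
    rw [← RingOfIntegers.coe_ne_zero_iff]
    push_cast [coe_quinticFactor, coe_cofactor]
    exact mul_ne_zero hδ0 hQ0
  have hsq : cofactor θ * quinticFactor θ (a : 𝓞 K) d * ((1 + θ) * (θ * a + d)) * 1 ^ 2 =
      (3 * (b : 𝓞 K)) ^ 2 := by
    have hcast : 2 * (a : 𝓞 K) ^ 5 + d ^ 5 = 3 * b ^ 2 := mod_cast congrArg Int.cast heq
    calc _ = ((1 + θ) * cofactor θ) * ((θ * a + d) * quinticFactor θ (a : 𝓞 K) d) := by ring
      _ = 3 * (3 * b ^ 2) := by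
        rw [h.one_add_mul_cofactor_eq_three, add_mul_quinticFactor, h.pow_five, hcast]
      _ = _ := by ring
  obtain ⟨i, j, k, l, m, n, y, hy⟩ := h.exists_eq_sUnit_mul_sq hz one_ne_zero hsq
    fun p hp => h.prime_dvd_ten_mul_cofactor_of_dvd had hp
  refine ⟨i, j, k, l, m, n, y / cofactor (θ : K), ?_⟩
  have hyK := congrArg (fun x : 𝓞 K => (x : K)) hy
  simp only [map_mul, map_pow, QuinticInt.coe_eval, coe_cofactor, coe_quinticFactor] at hyK
  field_simp
  linear_combination hyK

theorem exists_quinticFactor_eq_cofactor_mul_sq (heq : 2 * a ^ 5 + d ^ 5 = 3 * b ^ 2) :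
    ∃ y : K, quinticFactor (θ : K) a d = cofactor (θ : K) * y ^ 2 := by
  have hδ0 := h.adicDvd_cofactor_sub_one.ne_zero
  have hx := h.adicDvd_quinticFactor_div_cofactor_sub_one had
  obtain ⟨i, j, k, l, m, n, r, hr⟩ := h.exists_quinticFactor_eq_sUnit_mul_sq had heq
  obtain ⟨rfl, a', b', c', d', e', hres⟩ :=
    h.exists_adicDvd_sub_sUnit (hx.mono (by norm_num)) hr
  have hone : AdicDvd h.valuation 11
      (quinticFactor (θ : K) a d / cofactor (θ : K) - QuinticInt.eval (θ : K) 1) := by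
    rw [QuinticInt.eval_one]
    exact hx.mono (by norm_num)
  obtain ⟨rfl, rfl, rfl, rfl, rfl⟩ := QuinticInt.sUnits_independent i j k l m a' b' c' d' e'
    (h.isSmall_sub_of_adicDvd hone hres)
  refine ⟨r, ?_⟩
  rw [← mul_div_cancel₀ (quinticFactor (θ : K) a d) hδ0, mul_right_inj' hδ0, hr,
    QuinticInt.eval_sUnit h.coe_pow_five, QuinticInt.eval_unit h.coe_pow_five]
  simp

end EndPair

theorem adicDvd_sub_one_or_of_sq {q : K} (hq : AdicDvd h.valuation 20 (q ^ 2 - 1)) :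
    AdicDvd h.valuation 15 (q - 1) ∨ AdicDvd h.valuation 15 (-q - 1) := by
  obtain ⟨t, rfl⟩ : ∃ t : K, q = 1 + 2 * t := ⟨(q - 1) / 2, by ring⟩
  have htwo : AdicDvd h.valuation 5 (2 : K) := by simpa using h.adicDvd_two_pow 1
  have hprod : AdicDvd h.valuation 10 ((t + 1) * -t) := by
    rw [← h.adicDvd_pow_mul_iff (m := 10), show 10 = 5 * 2 from rfl, pow_mul, h.coe_pow_five,
      show 2 ^ 2 * ((t + 1) * -t) = 1 - (1 + 2 * t) ^ 2 by ring, AdicDvd.sub_comm_iff]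
    exact hq
  rcases h.adicDvd_sub_one_or_of_add_of_mul (x := t + 1) (y := -t) (by simp [AdicDvd])
    (hprod.mono (by norm_num)) with ht | ht
  · left
    rw [AdicDvd.sub_comm_iff, show 1 - (1 + 2 * t) = 2 * -t by ring]
    exact htwo.mul (ht.mul_iff.mp hprod) le_rfl
  · right
    rw [AdicDvd.sub_comm_iff, show 1 - -(1 + 2 * t) = 2 * (t + 1) by ring]
    exact htwo.mul (ht.mul_iff.mp (by rwa [mul_comm] at hprod)) le_rfl

end IsFifthRootTwo

namespace QuarticMap

variable {R : Type*} [CommRing R]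

/-- The numerator of the map `(a, d, y₁, y₂) ↦ δ * numer / denom` from the curve
`Q(a, d) = δ y₁²`, `Q(d, a) = δ y₂²` to the quartic of parameter `5`, where `Q` is the quintic
factor. -/
def numer (α a d y₁ y₂ : R) : R := (α ^ 2 * a ^ 2 - d ^ 2) * y₂ + (α ^ 2 * d ^ 2 - a ^ 2) * y₁

/-- The denominator of the same map. -/
def denom (α a d : R) : R := α * (α ^ 2 - 1) * (a * d) * (d ^ 2 - a ^ 2)

section Coefficients

variable (α u v : R)

/-- The part free of `y₁ y₂` of `δ * numer α a d y₁ y₂ ^ 2` on `Q(a, d) = δ y₁²`,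
`Q(d, a) = δ y₂²`, in terms of `u = a d` and `v = a² + d²`. -/
def normSum : R :=
  (2 * u ^ 4 + 10 * u ^ 3 * v - 2 * u * v ^ 3) +
    α * (4 * u ^ 4 - u ^ 3 * v - 2 * u ^ 2 * v ^ 2) +
    α ^ 2 * (2 * u ^ 4 - 2 * u ^ 3 * v - u ^ 2 * v ^ 2) +
    α ^ 3 * (4 * u ^ 4 + 5 * u ^ 3 * v - u * v ^ 3) + α ^ 4 * (-8 * u ^ 2 * v ^ 2 + 2 * v ^ 4)

/-- The square of `denom α a d`, in terms of `u = a d` and `v = a² + d²`. -/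
def denomSq : R :=
  α * (-8 * u ^ 4 + 2 * u ^ 2 * v ^ 2) + α ^ 2 * (-4 * u ^ 4 + u ^ 2 * v ^ 2) +
    α ^ 4 * (8 * u ^ 4 - 2 * u ^ 2 * v ^ 2)

/-- The product `(α² a² - d²) (α² d² - a²)`, in terms of `u = a d` and `v = a² + d²`. -/
def quadricProd : R := u ^ 2 + α ^ 2 * (2 * u ^ 2 - v ^ 2) + α ^ 4 * u ^ 2

/-- The product of the two quintic factors, in terms of `u = a d` and `v = a² + d²`. -/
def quinticProd : R :=
  (u ^ 4 + 4 * u ^ 3 * v - 2 * u * v ^ 3) +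
    α * (-2 * u ^ 4 - u ^ 3 * v + 2 * u ^ 2 * v ^ 2) +
    α ^ 2 * (-u ^ 4 - 2 * u ^ 3 * v + u ^ 2 * v ^ 2) +
    α ^ 3 * (2 * u ^ 4 + 2 * u ^ 3 * v - u * v ^ 3) + α ^ 4 * (u ^ 4 - 3 * u ^ 2 * v ^ 2 + v ^ 4)

/-- The part free of `q = y₁ y₂` of the second coordinate of the map to the quartic. -/
def constCoeff : R :=
  (-2 * u ^ 4 + 6 * u ^ 3 * v - 2 * u * v ^ 3) + α * (4 * u ^ 4 + u ^ 3 * v) +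
    α ^ 2 * (2 * u ^ 4 + 2 * u ^ 3 * v) + α ^ 3 * (-4 * u ^ 4 + 3 * u ^ 3 * v - u * v ^ 3) +
    α ^ 4 * (8 * u ^ 4 - 10 * u ^ 2 * v ^ 2 + 2 * v ^ 4)

/-- Half the coefficient of `δ q` in the second coordinate of the map to the quartic. -/
def linearCoeff : R := -u ^ 2 + α ^ 2 * (6 * u ^ 2 - v ^ 2) - α ^ 4 * u ^ 2

end Coefficients

theorem mul_numer_sq {α a d δ y₁ y₂ : R} (h₁ : quinticFactor α a d = δ * y₁ ^ 2)
    (h₂ : quinticFactor α d a = δ * y₂ ^ 2) : δ * numer α a d y₁ y₂ ^ 2 =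
      (α ^ 2 * a ^ 2 - d ^ 2) ^ 2 * quinticFactor α d a +
        (α ^ 2 * d ^ 2 - a ^ 2) ^ 2 * quinticFactor α a d +
        2 * ((α ^ 2 * a ^ 2 - d ^ 2) * (α ^ 2 * d ^ 2 - a ^ 2)) * δ * (y₁ * y₂) := by
  rw [numer, h₁, h₂]
  ring

section FifthRoot

variable {α : R} (hα : α ^ 5 = 2)

section Symmetric

variable (α) (a d : R)

theorem mul_eq_quadricProd :
    (α ^ 2 * a ^ 2 - d ^ 2) * (α ^ 2 * d ^ 2 - a ^ 2) =
      quadricProd α (a * d) (a ^ 2 + d ^ 2) := by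
  rw [quadricProd]
  ring

variable {α}
include hα

theorem add_eq_normSum :
    (α ^ 2 * a ^ 2 - d ^ 2) ^ 2 * quinticFactor α d a +
      (α ^ 2 * d ^ 2 - a ^ 2) ^ 2 * quinticFactor α a d =
      normSum α (a * d) (a ^ 2 + d ^ 2) := by
  rw [normSum, quinticFactor, quinticFactor]
  linear_combination ((-a ^ 7 * d + 2 * a ^ 5 * d ^ 3 + 2 * a ^ 3 * d ^ 5 - a * d ^ 7) +
    α * (-a ^ 6 * d ^ 2 - a ^ 2 * d ^ 6) + α ^ 2 * (-a ^ 5 * d ^ 3 - a ^ 3 * d ^ 5) +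
    α ^ 3 * (2 * a ^ 4 * d ^ 4)) * hα

theorem denom_sq_eq_denomSq : denom α a d ^ 2 = denomSq α (a * d) (a ^ 2 + d ^ 2) := by
  rw [denom, denomSq]
  linear_combination (α * (a ^ 6 * d ^ 2 - 2 * a ^ 4 * d ^ 4 + a ^ 2 * d ^ 6)) * hα

theorem mul_eq_quinticProd :
    quinticFactor α a d * quinticFactor α d a = quinticProd α (a * d) (a ^ 2 + d ^ 2) := by
  rw [quinticProd, quinticFactor, quinticFactor]
  linear_combination ((-a ^ 7 * d - a ^ 5 * d ^ 3 - a ^ 3 * d ^ 5 - a * d ^ 7) +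
    α * (a ^ 6 * d ^ 2 + a ^ 4 * d ^ 4 + a ^ 2 * d ^ 6) +
    α ^ 2 * (-a ^ 5 * d ^ 3 - a ^ 3 * d ^ 5) + α ^ 3 * (a ^ 4 * d ^ 4)) * hα

end Symmetric

include hα

theorem normSum_relation (u v : R) :
    normSum α u v ^ 2 + 10 * denomSq α u v * normSum α u v + 5 * denomSq α u v ^ 2 +
      4 * quadricProd α u v ^ 2 * quinticProd α u v =
      constCoeff α u v ^ 2 + 4 * linearCoeff α u v ^ 2 * quinticProd α u v := by
  rw [normSum, denomSq, quadricProd, quinticProd, constCoeff, linearCoeff]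
  linear_combination
    ((-32 * u ^ 7 * v - 32 * u ^ 6 * v ^ 2 + 8 * u ^ 5 * v ^ 3 + 8 * u ^ 4 * v ^ 4) +
      α * (64 * u ^ 8 + 384 * u ^ 7 * v - 160 * u ^ 5 * v ^ 3 - 4 * u ^ 4 * v ^ 4 +
        16 * u ^ 3 * v ^ 5) +
      α ^ 2 * (32 * u ^ 7 * v + 24 * u ^ 5 * v ^ 3 - 8 * u ^ 3 * v ^ 5) +
      α ^ 3 * (64 * u ^ 8 - 128 * u ^ 7 * v - 144 * u ^ 6 * v ^ 2 + 32 * u ^ 5 * v ^ 3 +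
        32 * u ^ 4 * v ^ 4) +
      α ^ 4 * (128 * u ^ 8 + 128 * u ^ 7 * v - 32 * u ^ 6 * v ^ 2 - 96 * u ^ 5 * v ^ 3 +
        16 * u ^ 3 * v ^ 5) +
      α ^ 5 * (64 * u ^ 8 - 208 * u ^ 6 * v ^ 2 + 112 * u ^ 4 * v ^ 4 - 16 * u ^ 2 * v ^ 6)) * hα

theorem quadricProd_relation (u v : R) :
    quadricProd α u v * (normSum α u v + 5 * denomSq α u v) =
      constCoeff α u v * linearCoeff α u v := by
  rw [normSum, denomSq, quadricProd, constCoeff, linearCoeff]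
  linear_combination
    ((-8 * u ^ 5 * v + 2 * u ^ 3 * v ^ 3) + α * (16 * u ^ 6 - 4 * u ^ 4 * v ^ 2) +
      α ^ 2 * (8 * u ^ 5 * v - 2 * u ^ 3 * v ^ 3) +
      α ^ 3 * (48 * u ^ 6 - 28 * u ^ 4 * v ^ 2 + 4 * u ^ 2 * v ^ 4)) * hα

section Curve

variable {a d δ y₁ y₂ : R} (h₁ : quinticFactor α a d = δ * y₁ ^ 2)
  (h₂ : quinticFactor α d a = δ * y₂ ^ 2)
include h₁ h₂

/-- Put `N = δ * numer ^ 2 = A + 2 P r` with `r = δ y₁ y₂`, so that `r ^ 2 = Q(a, d) Q(d, a)`. The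
left side then has the shape `B + C r` with `B`, `C` free of `r`, and `normSum_relation` and
`quadricProd_relation` say that it is `(T + 2 S r) ^ 2`. -/
theorem exists_sq_eq : ∃ t, (δ * numer α a d y₁ y₂ ^ 2) ^ 2 +
    10 * denom α a d ^ 2 * (δ * numer α a d y₁ y₂ ^ 2) + 5 * denom α a d ^ 4 = t ^ 2 := by
  have hsq : quinticProd α (a * d) (a ^ 2 + d ^ 2) = (δ * (y₁ * y₂)) ^ 2 := by
    rw [← mul_eq_quinticProd hα, h₁, h₂]
    ring
  refine ⟨constCoeff α (a * d) (a ^ 2 + d ^ 2) +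
    2 * linearCoeff α (a * d) (a ^ 2 + d ^ 2) * (δ * (y₁ * y₂)), ?_⟩
  rw [mul_numer_sq h₁ h₂, add_eq_normSum hα, mul_eq_quadricProd,
    show denom α a d ^ 4 = (denom α a d ^ 2) ^ 2 by ring, denom_sq_eq_denomSq hα]
  linear_combination normSum_relation hα (a * d) (a ^ 2 + d ^ 2) +
    4 * (δ * (y₁ * y₂)) * quadricProd_relation hα (a * d) (a ^ 2 + d ^ 2) +
    4 * (linearCoeff α (a * d) (a ^ 2 + d ^ 2) ^ 2 -
      quadricProd α (a * d) (a ^ 2 + d ^ 2) ^ 2) * hsq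

end Curve

end FifthRoot

theorem exists_onQuartic {K : Type*} [Field K] {α a d y₁ y₂ : K} (hα : α ^ 5 = 2)
    (h₁ : quinticFactor α a d = cofactor α * y₁ ^ 2)
    (h₂ : quinticFactor α d a = cofactor α * y₂ ^ 2) (hD : denom α a d ≠ 0) :
    ∃ s, OnQuartic α 5 (cofactor α * numer α a d y₁ y₂ / denom α a d) s := by
  obtain ⟨t, ht⟩ := exists_sq_eq hα h₁ h₂
  refine ⟨cofactor α * t / denom α a d ^ 2, ?_⟩
  rw [OnQuartic]
  field_simp
  push_cast
  linear_combination cofactor α ^ 2 * ht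

end QuarticMap

namespace IsFifthRootTwo

variable {K : Type*} [Field K] [NumberField K] {θ : 𝓞 K} (h : IsFifthRootTwo θ)
include h

theorem adicDvd_one_sub_sq_sub_one : AdicDvd h.valuation 1 (1 - (θ : K) ^ 2 - 1) := by
  rw [AdicDvd.sub_comm_iff, sub_sub_cancel]
  exact (h.adicDvd_pow 2).mono (by norm_num)

theorem adicDvd_odd_sq_sub_one {z : ℤ} (hz : Odd z) : AdicDvd h.valuation 15 ((z : K) ^ 2 - 1) := by
  have hdvd : (2 : 𝓞 K) ^ 3 ∣ (z : 𝓞 K) ^ 2 - 1 := by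
    convert map_dvd (Int.castRingHom (𝓞 K)) (Int.eight_dvd_sq_sub_one_of_odd hz) using 1
    · norm_num
    · simp
  simpa using h.adicDvd_coe_of_two_pow_dvd hdvd

section EndPair

variable {a d : ℤ} (had : IsEndPair a d) {y₁ y₂ : K}
  (h₁ : quinticFactor (θ : K) a d = cofactor (θ : K) * y₁ ^ 2)
  (h₂ : quinticFactor (θ : K) d a = cofactor (θ : K) * y₂ ^ 2)
include had h₁ h₂

theorem exists_numer_sq_eq (hy : AdicDvd h.valuation 15 (y₁ * y₂ - 1)) :
    ∃ u, QuarticMap.numer (θ : K) a d y₁ y₂ ^ 2 = 4 * (1 - (θ : K) ^ 2) ^ 2 * u ∧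
      AdicDvd h.valuation 10 (u - 1) := by
  have hβ := h.adicDvd_one_sub_sq_sub_one
  have hβ0 := hβ.ne_zero
  obtain ⟨u, hu⟩ : ∃ u, QuarticMap.numer (θ : K) a d y₁ y₂ ^ 2 = 4 * (1 - (θ : K) ^ 2) ^ 2 * u :=
    ⟨QuarticMap.numer (θ : K) a d y₁ y₂ ^ 2 / (4 * (1 - (θ : K) ^ 2) ^ 2), by field_simp⟩
  refine ⟨u, hu, ?_⟩
  have hsixteen := h.adicDvd_coe_of_two_pow_dvd (k := 4) (by
    convert had.sixteen_dvd_normSum_sub θ using 1; norm_num)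
  have hprod : AdicDvd h.valuation 0 (((θ : K) ^ 2 * a ^ 2 - d ^ 2) *
      ((θ : K) ^ 2 * d ^ 2 - a ^ 2) * cofactor (θ : K)) := by
    convert h.adicDvd_coe ((θ ^ 2 * a ^ 2 - d ^ 2) * (θ ^ 2 * d ^ 2 - a ^ 2) * cofactor θ) using 1
    push_cast [coe_cofactor, map_intCast]
    rfl
  push_cast [coe_quinticFactor, coe_cofactor, map_intCast, map_ofNat] at hsixteen
  have hsum := hsixteen.add ((h.adicDvd_two_pow 1).mul (hprod.mul hy le_rfl) le_rfl)
  rw [← hβ.mul_iff, ← hβ.mul_iff, ← h.adicDvd_cofactor_sub_one.mul_iff,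
    ← h.adicDvd_pow_mul_iff (m := 10), show 10 = 5 * 2 from rfl, pow_mul, h.coe_pow_five]
  convert hsum using 1
  linear_combination QuarticMap.mul_numer_sq h₁ h₂ - cofactor (θ : K) * hu

end EndPair

end IsFifthRootTwo

namespace IsFifthRootTwo

variable {K : Type*} [Field K] [NumberField K] {θ : 𝓞 K} (h : IsFifthRootTwo θ)
include h

theorem adicDvd_div_cofactor_mul_sub {e u : K} (he : AdicDvd h.valuation 10 (e - 1))
    (hu : AdicDvd h.valuation 10 (u - 1)) :
    AdicDvd h.valuation 10 (e / (cofactor (θ : K) * u) - 3 * (1 + (θ : K))) := by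
  have hδ := h.adicDvd_cofactor_sub_one
  have hu1 := hu.mono (m := 1) (by norm_num)
  have hδ0 := hδ.ne_zero
  have hu0 := hu1.ne_zero
  have hnine : AdicDvd h.valuation 0 (9 : K) := by simpa using h.adicDvd_intCast 9
  have hδθ := one_add_mul_cofactor (θ : K)
  rw [h.coe_pow_five] at hδθ
  rw [← hδ.mul_iff, ← hu1.mul_iff]
  convert (he.sub (hnine.mul hu le_rfl)).sub ((h.adicDvd_two_pow 3).mono (by norm_num)) using 1
  field_simp
  linear_combination -3 * u * hδθ

section EndPair

variable {a d o : ℤ} (had : IsEndPair a d) {y₁ y₂ : K}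
  (h₁ : quinticFactor (θ : K) a d = cofactor (θ : K) * y₁ ^ 2)
  (h₂ : quinticFactor (θ : K) d a = cofactor (θ : K) * y₂ ^ 2)
include had h₁ h₂

theorem quarticPoint_of_isEndPair {k : ℕ} (ho : Odd o) (hk : d ^ 2 - a ^ 2 = 2 ^ (k + 1) * o)
    (hy : AdicDvd h.valuation 15 (y₁ * y₂ - 1)) : h.QuarticPoint 5 k := by
  obtain ⟨u, hu, hu1⟩ := h.exists_numer_sq_eq had h₁ h₂ hy
  have hado : AdicDvd h.valuation 15 (((a : K) * d * o) ^ 2 - 1) := by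
    exact_mod_cast h.adicDvd_odd_sq_sub_one (had.odd_mul.mul ho)
  have hado0 : (a : K) * d * o ≠ 0 :=
    ne_zero_pow two_ne_zero (hado.mono (m := 1) (by norm_num)).ne_zero
  obtain ⟨⟨ha0, hd0⟩, ho0⟩ : ((a : K) ≠ 0 ∧ (d : K) ≠ 0) ∧ (o : K) ≠ 0 := by
    rwa [← mul_ne_zero_iff, ← mul_ne_zero_iff]
  have hδ0 := h.adicDvd_cofactor_sub_one.ne_zero
  have hβ0 := h.adicDvd_one_sub_sq_sub_one.ne_zero
  have hu0 := (hu1.mono (m := 1) (by norm_num)).ne_zero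
  have hθ0 : (θ : K) ≠ 0 := fun h0 => by simpa [h0] using h.coe_pow_five
  have hdenom : QuarticMap.denom (θ : K) a d =
      -(2 ^ (k + 1) * θ * (1 - (θ : K) ^ 2) * (a * d * o)) := by
    have hkK : (d : K) ^ 2 - a ^ 2 = 2 ^ (k + 1) * o := by
      exact_mod_cast congrArg (Int.cast : ℤ → K) hk
    rw [QuarticMap.denom, hkK]
    ring
  have hdenom0 : QuarticMap.denom (θ : K) a d ≠ 0 := by
    rw [hdenom]
    exact neg_ne_zero.mpr (mul_ne_zero (mul_ne_zero (mul_ne_zero (by simp) hθ0) hβ0) hado0)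
  have hnumer0 : QuarticMap.numer (θ : K) a d y₁ y₂ ≠ 0 :=
    ne_zero_pow two_ne_zero
      (hu ▸ mul_ne_zero (mul_ne_zero (by simp) (pow_ne_zero 2 hβ0)) hu0)
  obtain ⟨s, hs⟩ := QuarticMap.exists_onQuartic h.coe_pow_five h₁ h₂ hdenom0
  refine ⟨_, s, (a * d * o) ^ 2 / (cofactor (θ : K) * u), by positivity, hs, ?_,
    h.adicDvd_div_cofactor_mul_sub (hado.mono (by norm_num)) hu1⟩
  rw [div_pow, mul_pow, hu, hdenom, show (4 : K) ^ k = 2 ^ (k * 2) by rw [pow_mul']; norm_num]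
  field_simp
  ring

theorem adicDvd_mul_sq_sub_one : AdicDvd h.valuation 20 ((y₁ * y₂) ^ 2 - 1) := by
  have hδ := h.adicDvd_cofactor_sub_one
  have hsixteen := h.adicDvd_coe_of_two_pow_dvd (k := 4) (by
    convert had.sixteen_dvd_quinticFactor_mul_sub θ using 1; norm_num)
  push_cast [coe_quinticFactor, coe_cofactor, h₁, h₂] at hsixteen
  rw [← hδ.mul_iff, ← hδ.mul_iff]
  convert hsixteen using 1
  ring

end EndPair

end IsFifthRootTwo

theorem exists_isFifthRootTwo :
    ∃ (K : Type) (_ : Field K) (_ : NumberField K) (θ : 𝓞 K), IsFifthRootTwo θ := by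
  have hirr := irreducible_X_pow_five_sub_two
  have := Fact.mk hirr
  let B := AdjoinRoot.powerBasis hirr.ne_zero
  have : FiniteDimensional ℚ (AdjoinRoot (X ^ 5 - C 2 : ℚ[X])) := B.finite
  have : NumberField (AdjoinRoot (X ^ 5 - C 2 : ℚ[X])) := {}
  have hroot : AdjoinRoot.root (X ^ 5 - C 2 : ℚ[X]) ^ 5 = 2 := by
    have := AdjoinRoot.eval₂_root (X ^ 5 - C 2 : ℚ[X])
    simpa only [eval₂_sub, eval₂_X_pow, eval₂_C, eval₂_ofNat, map_ofNat, sub_eq_zero] using this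
  have hint : IsIntegral ℤ (AdjoinRoot.root (X ^ 5 - C 2 : ℚ[X])) :=
    .of_pow (n := 5) (by norm_num) (by
      rw [hroot]
      exact_mod_cast isIntegral_algebraMap (R := ℤ) (x := (2 : ℤ)))
  refine ⟨_, _, this, ⟨_, hint⟩, RingOfIntegers.ext hroot, ?_⟩
  rw [B.finrank, AdjoinRoot.powerBasis_dim, natDegree_X_pow_sub_C]

theorem eq_of_two_mul_pow_five_add_pow_five_eq {a b c d : ℤ} (hab : IsCoprime a b)
    (h₁ : 2 * a ^ 5 + d ^ 5 = 3 * b ^ 2) (h₂ : 2 * d ^ 5 + a ^ 5 = 3 * c ^ 2) : d = a := by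
  by_contra hne
  obtain ⟨K, _, _, θ, h⟩ := exists_isFifthRootTwo
  have had := IsEndPair.of_progression hab h₁ h₂
  obtain ⟨k, o, ho, hk⟩ := had.exists_sq_sub_sq_eq hne
  obtain ⟨y₁, hy₁⟩ := h.exists_quinticFactor_eq_cofactor_mul_sq had h₁
  obtain ⟨y₂, hy₂⟩ := h.exists_quinticFactor_eq_cofactor_mul_sq had.symm h₂
  rcases h.adicDvd_sub_one_or_of_sq (h.adicDvd_mul_sq_sub_one had hy₁ hy₂) with hy | hy
  · exact h.not_quarticPoint k (h.quarticPoint_of_isEndPair had hy₁ hy₂ ho hk hy)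
  · have hy₂' : quinticFactor (θ : K) d a = cofactor (θ : K) * (-y₂) ^ 2 := by rwa [neg_sq]
    exact h.not_quarticPoint k
      (h.quarticPoint_of_isEndPair had hy₁ hy₂' ho hk (by rwa [mul_neg]))

/-- There is no primitive non-constant arithmetic progression of integers of the
form `x₁⁵, x₂², x₃², x₄⁵`. -/
theorem no_AP_5225 :
    ¬ ∃ (x₁ x₂ x₃ x₄ d : ℤ), d ≠ 0 ∧
      Int.gcd (x₁ ^ 5) (x₂ ^ 2) = 1 ∧
      x₂ ^ 2 - x₁ ^ 5 = d ∧
      x₃ ^ 2 - x₂ ^ 2 = d ∧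
      x₄ ^ 5 - x₃ ^ 2 = d := by
  rintro ⟨x₁, x₂, x₃, x₄, d, hd, hgcd, hd₁, hd₂, hd₃⟩
  have hcoprime : IsCoprime x₁ x₂ :=
    (IsCoprime.pow_iff (by norm_num) (by norm_num)).mp (Int.isCoprime_iff_gcd_eq_one.mpr hgcd)
  obtain rfl : x₄ = x₁ := eq_of_two_mul_pow_five_add_pow_five_eq (b := x₂) (c := x₃) hcoprime
    (by linarith) (by linarith)
  exact hd (by linarith)
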